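/- Let n ≥ 1 and let Ω ⊊ ℝⁿ be a nonempty open set with d(x) := dist(x, ℝⁿ∖Ω), satisfying −Δd ≥ 0 in the sense of distributions on Ω, i.e. ∫_Ω d Δφ dx ≤ 0 for every nonnegative φ ∈ C_c^∞(Ω). Then for every s > 1 and every u ∈ C_c^∞(Ω), one has ∫_Ω |∇u| / d^{s−1} dx ≥ (s−1) · ∫_Ω |u| / d^s dx. Moreover the constant s−1 is sharp: for every ε > 0 there exists a nonzero u ∈ C_c^∞(Ω) with ∫_Ω |∇u| / d^{s−1} dx < (s−1+ε) · ∫_Ω |u| / d^s dx. -/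

import Mathlib

open MeasureTheory Metric Set

/-- The (pointwise) Laplacian of a function on Euclidean space,
as the sum of its repeated directional derivatives along the coordinate directions. -/
noncomputable def lapl {n : ℕ} (φ : EuclideanSpace ℝ (Fin n) → ℝ)
    (x : EuclideanSpace ℝ (Fin n)) : ℝ :=
  ∑ i : Fin n,
    fderiv ℝ (fun y => fderiv ℝ φ y (EuclideanSpace.single i (1 : ℝ))) x
      (EuclideanSpace.single i (1 : ℝ))

/-!
Let `d` be the distance to the complement of `Ω`, so `|∇d| = 1` almost everywhere in `Ω`. For
`u ≥ 0`, test the superharmonicity of `d` with `u / d ^ (s - 1)`; since this function is only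
Lipschitz, it is first mollified. The result `∫ ⟪∇d, ∇u⟫ / d ^ (s - 1) ≥ (s - 1) ∫ u / d ^ s` is
the inequality, because `⟪∇d, ∇u⟫ ≤ |∇u|`.

For sharpness, let a ball in `Ω` touch the boundary at `y` with inner normal `e`. The rescaled
distances `z ↦ d (y + T z) / T` are bounded below by `⟪e, z⟫ - O(T)`, by the touching ball, and
their averages over a ball tangent to the boundary of the half-space `⟪e, z⟫ > 0` at `0` are at
most those of `⟪e, z⟫`, by the mean value inequality for superharmonic functions. Hence they
converge to `⟪e, z⟫` in `L^1` on compact subsets of the half-space, and an almost extremal function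
for the half-space, moved by the homothety, is almost extremal for `Ω`. On the half-space the
inequality reduces to the half-line, where integration by parts makes it an equality up to the
decreasing part of the profile, whose weight tends to `0`.
-/

section
open Filter Topology InnerProductSpace Laplacian
open scoped NNReal ContDiff Convolution Gradient

section TestFunction

variable {E : Type*} [NormedAddCommGroup E] [NormedSpace ℝ E]

/-- The class `C_c^∞(Ω)`, as a predicate on functions defined on the whole space; for open `Ω` this
is an unbundled form of Mathlib's `TestFunction`. -/
structure IsTestFunction (Ω : Set E) (u : E → ℝ) : Prop where
  contDiff : ContDiff ℝ ∞ u
  hasCompactSupport : HasCompactSupport u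
  tsupport_subset : tsupport u ⊆ Ω

lemma isTestFunction_of_isCompact {Ω K : Set E} {u : E → ℝ} (hu : ContDiff ℝ ∞ u)
    (hK : IsCompact K) (hKΩ : K ⊆ Ω) (h0 : ∀ x ∉ K, u x = 0) : IsTestFunction Ω u where
  contDiff := hu
  hasCompactSupport := .intro hK h0
  tsupport_subset :=
    (closure_minimal (Function.support_subset_iff'.2 h0) hK.isClosed).trans hKΩ

end TestFunction

section Mollification

variable {E : Type*} [NormedAddCommGroup E] [NormedSpace ℝ E] [FiniteDimensional ℝ E]
  [MeasurableSpace E] [BorelSpace E] {μ : Measure E} [μ.IsAddHaarMeasure]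

lemma integral_mul_fderiv_apply_eq_neg {f g : E → ℝ} {C D : ℝ≥0} (hf : LipschitzWith C f)
    (hg : LipschitzWith D g) (hgc : HasCompactSupport g) (v : E) :
    ∫ x, f x * fderiv ℝ g x v ∂μ = -∫ x, fderiv ℝ f x v * g x ∂μ := by
  have hf' : ∫ x, lineDeriv ℝ f x v * g x ∂μ = ∫ x, fderiv ℝ f x v * g x ∂μ :=
    integral_congr_ae <| hf.ae_differentiableAt.mono fun x hx ↦ by
      simp only [hx.lineDeriv_eq_fderiv]
  have hg' : ∫ x, lineDeriv ℝ g x (-v) * f x ∂μ = ∫ x, -(f x * fderiv ℝ g x v) ∂μ :=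
    integral_congr_ae <| hg.ae_differentiableAt.mono fun x hx ↦ by
      simp only [hx.lineDeriv_eq_fderiv, map_neg]
      ring
  rw [← hf', hf.integral_lineDeriv_mul_eq hg hgc, hg', integral_neg, neg_neg]

lemma fderiv_convolution_of_lipschitzWith {ρ φ : E → ℝ} {C : ℝ≥0} (hρ : Continuous ρ)
    (hρc : HasCompactSupport ρ) (hφ : LipschitzWith C φ) (x : E) :
    fderiv ℝ (ρ ⋆[.lsmul ℝ ℝ, μ] φ) x = (ρ ⋆[.lsmul ℝ ℝ, μ] fderiv ℝ φ) x := by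
  have hρi : Integrable ρ μ := hρ.integrable_of_hasCompactSupport hρc
  have hcont (y : E) : Continuous fun t ↦ ρ t * φ (y - t) :=
    hρ.mul (hφ.continuous.comp (continuous_const.sub continuous_id))
  have hmeas : AEStronglyMeasurable (fun t ↦ ρ t • fderiv ℝ φ (x - t)) μ :=
    hρ.aestronglyMeasurable.smul ((measurable_fderiv ℝ φ).comp
      (measurable_const.sub measurable_id)).aestronglyMeasurable
  have hlip : ∀ᵐ t ∂μ, LipschitzOnWith (Real.nnabs (ρ t * C)) (fun y ↦ ρ t * φ (y - t)) univ := by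
    refine .of_forall fun t ↦ LipschitzOnWith.of_dist_le_mul fun y _ z _ ↦ ?_
    have h := hφ.dist_le_mul (y - t) (z - t)
    rw [dist_sub_right, Real.dist_eq] at h
    rw [Real.dist_eq, ← mul_sub, abs_mul, Real.coe_nnabs, abs_mul, NNReal.abs_eq, mul_assoc]
    gcongr
  have hdiff : ∀ᵐ t ∂μ, HasFDerivAt (fun y ↦ ρ t * φ (y - t)) (ρ t • fderiv ℝ φ (x - t)) x := by
    have :=
      (Measure.measurePreserving_sub_left μ x).quasiMeasurePreserving.ae hφ.ae_differentiableAt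
    filter_upwards [this] with t ht
    exact ((hasFDerivAt_comp_sub t).2 ht.hasFDerivAt).const_mul (ρ t)
  exact (hasFDerivAt_integral_of_dominated_loc_of_lip univ_mem
    (.of_forall fun y ↦ (hcont y).aestronglyMeasurable)
    ((hcont x).integrable_of_hasCompactSupport hρc.mul_right)
    hmeas hlip (hρi.mul_const _) hdiff).2.fderiv

lemma norm_fderiv_normed_convolution_le {φ : E → ℝ} {C : ℝ≥0} (hφ : LipschitzWith C φ)
    (ρ : ContDiffBump (0 : E)) (x : E) :
    ‖fderiv ℝ (ρ.normed μ ⋆[.lsmul ℝ ℝ, μ] φ) x‖ ≤ C := by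
  rw [fderiv_convolution_of_lipschitzWith ρ.continuous_normed ρ.hasCompactSupport_normed hφ,
    ← one_mul (C : ℝ), ← ρ.integral_normed (μ := μ), ← integral_mul_const]
  refine norm_integral_le_of_norm_le (ρ.integrable_normed.mul_const _) (.of_forall fun t ↦ ?_)
  simp only [ContinuousLinearMap.lsmul_apply, norm_smul, Real.norm_of_nonneg (ρ.nonneg_normed t)]
  exact mul_le_mul_of_nonneg_left (norm_fderiv_le_of_lipschitz ℝ hφ) (ρ.nonneg_normed t)

lemma tsupport_normed_convolution_subset (ρ : ContDiffBump (0 : E)) (φ : E → ℝ) :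
    tsupport (ρ.normed μ ⋆[.lsmul ℝ ℝ, μ] φ) ⊆ cthickening ρ.rOut (tsupport φ) := by
  refine closure_minimal ((support_convolution_subset_swap _).trans ?_) isClosed_cthickening
  rintro _ ⟨a, ha, b, hb, rfl⟩
  rw [ρ.support_normed_eq, mem_ball_zero_iff] at hb
  refine mem_cthickening_of_dist_le _ a _ _ (subset_tsupport φ ha) ?_
  simpa only [dist_self_add_left] using hb.le

lemma locallyIntegrable_fderiv {φ : E → ℝ} {C : ℝ≥0} (hφ : LipschitzWith C φ) :
    LocallyIntegrable (fderiv ℝ φ) μ :=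
  (locallyIntegrable_const (C : ℝ)).mono (measurable_fderiv ℝ φ).aestronglyMeasurable <|
    .of_forall fun x ↦ by
      simpa only [NNReal.norm_eq] using norm_fderiv_le_of_lipschitz ℝ hφ

variable (μ) in
lemma exists_isTestFunction_tendsto_fderiv {Ω : Set E} (hΩ : IsOpen Ω) {φ : E → ℝ} {C : ℝ≥0}
    (hφ : LipschitzWith C φ) (hφc : HasCompactSupport φ) (hφΩ : tsupport φ ⊆ Ω)
    (hφ0 : ∀ x, 0 ≤ φ x) :
    ∃ (K : Set E) (Φ : ℕ → E → ℝ), IsCompact K ∧ (∀ k, tsupport (Φ k) ⊆ K) ∧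
      (∀ k, IsTestFunction Ω (Φ k)) ∧ (∀ k x, 0 ≤ Φ k x) ∧ (∀ k x, ‖fderiv ℝ (Φ k) x‖ ≤ C) ∧
      ∀ᵐ x ∂μ, Tendsto (fun k ↦ fderiv ℝ (Φ k) x) atTop (𝓝 (fderiv ℝ φ x)) := by
  obtain ⟨δ, hδ, hδΩ⟩ := hφc.isCompact.exists_cthickening_subset_open hΩ hφΩ
  have hr (k : ℕ) : 0 < δ / (k + 1) := by positivity
  let ρ (k : ℕ) : ContDiffBump (0 : E) :=
    ⟨δ / (k + 1) / 2, δ / (k + 1), half_pos (hr k), half_lt_self (hr k)⟩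
  let Φ (k : ℕ) : E → ℝ := (ρ k).normed μ ⋆[.lsmul ℝ ℝ, μ] φ
  have hK : IsCompact (cthickening δ (tsupport φ)) := hφc.isCompact.cthickening
  have hΦK (k : ℕ) : tsupport (Φ k) ⊆ cthickening δ (tsupport φ) :=
    (tsupport_normed_convolution_subset (ρ k) φ).trans <|
      cthickening_mono (div_le_self hδ.le (le_add_of_nonneg_left k.cast_nonneg)) _
  have hΦ (k : ℕ) : IsTestFunction Ω (Φ k) :=
    ⟨(ρ k).hasCompactSupport_normed.contDiff_convolution_left _ (ρ k).contDiff_normed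
      hφ.continuous.locallyIntegrable, hK.of_isClosed_subset (isClosed_tsupport _) (hΦK k),
      (hΦK k).trans hδΩ⟩
  have hlim : ∀ᵐ x ∂μ, Tendsto (fun k ↦ fderiv ℝ (Φ k) x) atTop (𝓝 (fderiv ℝ φ x)) := by
    have hder (k : ℕ) : fderiv ℝ (Φ k) = (ρ k).normed μ ⋆[.lsmul ℝ ℝ, μ] fderiv ℝ φ :=
      funext fun x ↦ fderiv_convolution_of_lipschitzWith (ρ k).continuous_normed
        (ρ k).hasCompactSupport_normed hφ x
    simp only [hder]
    refine ContDiffBump.ae_convolution_tendsto_right_of_locallyIntegrable (K := 2) ?_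
      (.of_forall fun k ↦ (mul_div_cancel₀ _ two_ne_zero).ge) (locallyIntegrable_fderiv hφ)
    exact ((tendsto_const_div_atTop_nhds_zero_nat δ).comp (tendsto_add_atTop_nat 1)).congr
      fun k ↦ by simp only [ρ, Function.comp_apply, Nat.cast_add_one]
  exact ⟨_, Φ, hK, hΦK, hΦ,
    fun k x ↦ integral_nonneg fun t ↦ mul_nonneg ((ρ k).nonneg_normed t) (hφ0 _),
    fun k ↦ norm_fderiv_normed_convolution_le hφ (ρ k), hlim⟩

end Mollification

section WeakFormulation

variable {E : Type*} [NormedAddCommGroup E] [InnerProductSpace ℝ E] [FiniteDimensional ℝ E]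
  {Ω : Set E} {d : E → ℝ} {L : ℝ≥0}

lemma norm_gradient_le_of_lipschitzWith (hd : LipschitzWith L d) (x : E) : ‖∇ d x‖ ≤ L := by
  rw [gradient, LinearIsometryEquiv.norm_map]
  exact norm_fderiv_le_of_lipschitz ℝ hd

lemma norm_fderiv_apply_gradient_le (hd : LipschitzWith L d) {φ : E → ℝ} {C : ℝ} {x : E}
    (hφ : ‖fderiv ℝ φ x‖ ≤ C) : ‖fderiv ℝ φ x (∇ d x)‖ ≤ C * L :=
  (fderiv ℝ φ x).le_of_opNorm_le_of_le hφ (norm_gradient_le_of_lipschitzWith hd x)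

lemma sum_fderiv_apply_mul_fderiv_apply {ι : Type*} [Fintype ι] (b : OrthonormalBasis ι ℝ E)
    (φ d : E → ℝ) (x : E) :
    ∑ i, fderiv ℝ d x (b i) * fderiv ℝ φ x (b i) = fderiv ℝ φ x (∇ d x) := by
  simp only [← inner_gradient_left (𝕜 := ℝ)]
  rw [real_inner_comm, ← b.sum_inner_mul_inner]
  simp only [real_inner_comm (∇ φ x)]

lemma laplacian_eq_sum_fderiv_fderiv {ι : Type*} [Fintype ι] (b : OrthonormalBasis ι ℝ E)
    {φ : E → ℝ} (hφ : ContDiff ℝ 2 φ) (x : E) :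
    Δ φ x = ∑ i, fderiv ℝ (fun y ↦ fderiv ℝ φ y (b i)) x (b i) := by
  have hdiff : Differentiable ℝ (fderiv ℝ φ) :=
    (hφ.fderiv_right (m := 1) le_rfl).differentiable one_ne_zero
  simp only [laplacian_eq_iteratedFDeriv_orthonormalBasis φ b, iteratedFDeriv_two_apply,
    fderiv_clm_apply (hdiff x) (differentiableAt_const _), fderiv_fun_const, Matrix.cons_val_zero,
    Matrix.cons_val_one, ContinuousLinearMap.flip_apply,
    ContinuousLinearMap.comp_zero, Pi.zero_apply, zero_add]

variable [MeasurableSpace E] [BorelSpace E]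

lemma measurable_gradient (f : E → ℝ) : Measurable (∇ f) :=
  (toDual ℝ E).symm.continuous.measurable.comp (measurable_fderiv ℝ f)

lemma measurable_fderiv_apply_gradient (φ d : E → ℝ) :
    Measurable fun x ↦ fderiv ℝ φ x (∇ d x) := by
  simp only [← inner_gradient_left]
  exact (measurable_gradient φ).inner (measurable_gradient d)

/-- `-Δ d ≥ 0` on `Ω` in the sense of distributions. The integral runs over the whole space because
`Δ φ` vanishes outside `Ω`. -/
def IsDistribSuperharmonicOn (d : E → ℝ) (Ω : Set E) : Prop :=
  ∀ φ : E → ℝ, IsTestFunction Ω φ → (∀ x, 0 ≤ φ x) → ∫ x, d x * Δ φ x ≤ 0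

lemma integral_mul_laplacian (hd : LipschitzWith L d) {φ : E → ℝ} (hφ : ContDiff ℝ 2 φ)
    (hφc : HasCompactSupport φ) :
    ∫ x, d x * Δ φ x = -∫ x, fderiv ℝ φ x (∇ d x) := by
  let b := stdOrthonormalBasis ℝ E
  let g i : E → ℝ := fun x ↦ fderiv ℝ φ x (b i)
  have hg i : ContDiff ℝ 1 (g i) := (hφ.fderiv_right (m := 1) le_rfl).clm_apply contDiff_const
  have hgc i : HasCompactSupport (g i) := hφc.fderiv_apply (𝕜 := ℝ) _
  have hint_left i : Integrable fun x ↦ d x * fderiv ℝ (g i) x (b i) :=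
    (hd.continuous.mul (((hg i).continuous_fderiv one_ne_zero).clm_apply
      continuous_const)).integrable_of_hasCompactSupport ((hgc i).fderiv_apply (𝕜 := ℝ) _).mul_left
  have hint_right i : Integrable fun x ↦ fderiv ℝ d x (b i) * g i x := by
    refine ((hg i).continuous.integrable_of_hasCompactSupport (hgc i)).bdd_mul (c := L * ‖b i‖)
      (measurable_fderiv_apply_const ℝ d _).aestronglyMeasurable (.of_forall fun x ↦ ?_)
    exact (fderiv ℝ d x).le_of_opNorm_le (norm_fderiv_le_of_lipschitz ℝ hd) _
  calc ∫ x, d x * Δ φ x = ∑ i, ∫ x, d x * fderiv ℝ (g i) x (b i) := by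
        simp only [laplacian_eq_sum_fderiv_fderiv b hφ, Finset.mul_sum]
        exact integral_finsetSum _ fun i _ ↦ hint_left i
    _ = ∑ i, -∫ x, fderiv ℝ d x (b i) * g i x := by
        refine Finset.sum_congr rfl fun i _ ↦ ?_
        obtain ⟨D, hD⟩ := (hg i).lipschitzWith_of_hasCompactSupport (hgc i) one_ne_zero
        exact integral_mul_fderiv_apply_eq_neg hd hD (hgc i) _
    _ = -∫ x, fderiv ℝ φ x (∇ d x) := by
        rw [Finset.sum_neg_distrib, ← integral_finsetSum _ fun i _ ↦ hint_right i]
        simp only [g, sum_fderiv_apply_mul_fderiv_apply]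

lemma integral_fderiv_apply_gradient_nonneg (hΩ : IsOpen Ω) (hd : LipschitzWith L d)
    (hsuper : IsDistribSuperharmonicOn d Ω) {φ : E → ℝ} {C : ℝ≥0} (hφ : LipschitzWith C φ)
    (hφc : HasCompactSupport φ) (hφΩ : tsupport φ ⊆ Ω) (hφ0 : ∀ x, 0 ≤ φ x) :
    0 ≤ ∫ x, fderiv ℝ φ x (∇ d x) := by
  obtain ⟨K, Φ, hK, hΦK, hΦ, hΦ0, hΦC, hlim⟩ :=
    exists_isTestFunction_tendsto_fderiv volume hΩ hφ hφc hφΩ hφ0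
  have hnonneg (k : ℕ) : 0 ≤ ∫ x, fderiv ℝ (Φ k) x (∇ d x) := by
    have h := hsuper (Φ k) (hΦ k) (hΦ0 k)
    rw [integral_mul_laplacian hd (contDiff_infty.1 (hΦ k).contDiff 2)
      (hΦ k).hasCompactSupport] at h
    exact neg_nonpos.1 h
  refine ge_of_tendsto' (tendsto_integral_of_dominated_convergence
    (K.indicator fun _ ↦ (C : ℝ) * L)
    (fun k ↦ (measurable_fderiv_apply_gradient _ _).aestronglyMeasurable) ?_ (fun k ↦ ?_) ?_)
    hnonneg
  · exact (integrable_indicator_iff hK.measurableSet).2 (integrableOn_const hK.measure_lt_top.ne)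
  · refine .of_forall fun x ↦ ?_
    by_cases hx : x ∈ K
    · rw [indicator_of_mem hx]
      exact norm_fderiv_apply_gradient_le hd (hΦC k x)
    · rw [indicator_of_notMem hx, fderiv_of_notMem_tsupport ℝ fun h ↦ hx (hΦK k h)]
      exact norm_zero.le
  · filter_upwards [hlim] with x hx
    exact (ContinuousLinearMap.apply ℝ ℝ (∇ d x)).continuous.tendsto _ |>.comp hx

end WeakFormulation

section Lipschitz

lemma lipschitzOnWith_rpow_neg {a c : ℝ} (ha : 0 ≤ a) (hc : 0 < c) :
    LipschitzOnWith (a * c ^ (-a - 1)).toNNReal (fun t : ℝ ↦ t ^ (-a)) (Ici c) := by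
  refine (convex_Ici c).lipschitzOnWith_of_nnnorm_hasDerivWithin_le
    (fun t ht ↦ (Real.hasDerivAt_rpow_const (.inl (hc.trans_le ht).ne')).hasDerivWithinAt)
    fun t ht ↦ ?_
  have ht0 : 0 < t := hc.trans_le ht
  rw [← NNReal.coe_le_coe, coe_nnnorm, norm_mul, norm_neg, Real.norm_of_nonneg ha,
    Real.norm_of_nonneg (Real.rpow_nonneg ht0.le _), Real.coe_toNNReal _ (by positivity)]
  exact mul_le_mul_of_nonneg_left (Real.rpow_le_rpow_of_nonpos hc ht (by linarith)) ha

lemma lipschitzWith_mul_of_bounded {X : Type*} [PseudoMetricSpace X] {f g : X → ℝ}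
    {A B C D : ℝ≥0} (hf : LipschitzWith C f) (hg : LipschitzWith D g) (hfA : ∀ x, ‖f x‖ ≤ A)
    (hgB : ∀ x, ‖g x‖ ≤ B) : LipschitzWith (A * D + B * C) fun x ↦ f x * g x := by
  refine LipschitzWith.of_dist_le_mul fun x y ↦ ?_
  calc dist (f x * g x) (f y * g y)
      = ‖f x * (g x - g y) + g y * (f x - f y)‖ := by rw [dist_eq_norm]; ring_nf
    _ ≤ ‖f x‖ * dist (g x) (g y) + ‖g y‖ * dist (f x) (f y) := by
        simpa only [dist_eq_norm, norm_mul] using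
          norm_add_le (f x * (g x - g y)) (g y * (f x - f y))
    _ ≤ A * (D * dist x y) + B * (C * dist x y) := by
        gcongr
        exacts [hfA x, hg.dist_le_mul x y, hgB y, hf.dist_le_mul x y]
    _ = ↑(A * D + B * C) * dist x y := by push_cast; ring

lemma exists_lipschitzWith_div_rpow {X : Type*} [PseudoMetricSpace X] {u d : X → ℝ}
    {C L : ℝ≥0} {a : ℝ} (ha : 0 ≤ a) (hu : LipschitzWith C u) (huc : HasCompactSupport u)
    (hd : LipschitzWith L d) (hd0 : ∀ x ∈ tsupport u, 0 < d x) :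
    ∃ D, LipschitzWith D fun x ↦ u x / d x ^ a := by
  obtain ⟨c, hc, hcd⟩ := huc.isCompact.exists_forall_le' hd.continuous.continuousOn hd0
  obtain ⟨M, hM⟩ := hu.continuous.bounded_above_of_compact_support huc
  have hw : LipschitzWith ((a * c ^ (-a - 1)).toNNReal * L) fun x ↦ max (d x) c ^ (-a) :=
    lipschitzOnWith_univ.1 <| (lipschitzOnWith_rpow_neg ha hc).comp
      (lipschitzOnWith_univ.2 (hd.max_const c)) fun x _ ↦ le_max_right (d x) c
  have hwB (x : X) : ‖max (d x) c ^ (-a)‖ ≤ (c ^ (-a)).toNNReal := by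
    rw [Real.coe_toNNReal _ (by positivity),
      Real.norm_of_nonneg (Real.rpow_nonneg (hc.le.trans (le_max_right _ _)) _)]
    exact Real.rpow_le_rpow_of_nonpos hc (le_max_right _ _) (neg_nonpos.2 ha)
  have huw (x : X) : u x / d x ^ a = u x * max (d x) c ^ (-a) := by
    by_cases hx : x ∈ tsupport u
    · rw [max_eq_left (hcd x hx), Real.rpow_neg (hd0 x hx).le, div_eq_mul_inv]
    · rw [image_eq_zero_of_notMem_tsupport hx, zero_div, zero_mul]
  simp only [huw]
  exact ⟨_, lipschitzWith_mul_of_bounded hu hw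
    (fun x ↦ (hM x).trans (Real.le_coe_toNNReal M)) hwB⟩

end Lipschitz

section Integrability

lemma integrable_div_rpow_of_isCompact {X : Type*} [TopologicalSpace X] [T2Space X]
    [MeasurableSpace X] [OpensMeasurableSpace X] {μ : Measure X} {K : Set X} {g d : X → ℝ}
    (hK : IsCompact K) (hg : Integrable g μ) (hgK : ∀ x ∉ K, g x = 0) (hd : ContinuousOn d K)
    (hd0 : ∀ x ∈ K, 0 < d x) (p : ℝ) : Integrable (fun x ↦ g x / d x ^ p) μ := by
  refine IntegrableOn.integrable_of_forall_notMem_eq_zero (s := K) ?_ fun x hx ↦ by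
    rw [hgK x hx, zero_div]
  simp only [div_eq_mul_inv]
  exact hg.integrableOn.mul_continuousOn ((hd.rpow_const fun x hx ↦ .inl (hd0 x hx).ne').inv₀
    fun x hx ↦ (Real.rpow_pos_of_pos (hd0 x hx) p).ne') hK

lemma integrable_norm_fderiv {E : Type*} [NormedAddCommGroup E] [NormedSpace ℝ E]
    [FiniteDimensional ℝ E] [MeasurableSpace E] [BorelSpace E] {μ : Measure E}
    [μ.IsAddHaarMeasure] {φ : E → ℝ} {C : ℝ≥0} (hφ : LipschitzWith C φ)
    (hφc : HasCompactSupport φ) : Integrable (fun x ↦ ‖fderiv ℝ φ x‖) μ :=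
  IntegrableOn.integrable_of_forall_notMem_eq_zero
    ((locallyIntegrable_fderiv hφ).integrableOn_isCompact hφc).norm
    fun x hx ↦ by rw [fderiv_of_notMem_tsupport ℝ hx, norm_zero]

end Integrability

section Hardy

variable {E : Type*} [NormedAddCommGroup E]

lemma norm_fderiv_abs_le [NormedSpace ℝ E] {u : E → ℝ} {x : E} (hu : ContinuousAt u x) :
    ‖fderiv ℝ (fun y ↦ |u y|) x‖ ≤ ‖fderiv ℝ u x‖ := by
  rcases lt_trichotomy (u x) 0 with hx | hx | hx
  · have : (fun y ↦ |u y|) =ᶠ[𝓝 x] fun y ↦ -u y :=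
      (hu.eventually_lt_const hx).mono fun y hy ↦ abs_of_neg hy
    rw [this.fderiv_eq, fderiv_fun_neg, norm_neg]
  · have : IsLocalMin (fun y ↦ |u y|) x := .of_forall fun y ↦ by
      simpa only [hx, abs_zero] using abs_nonneg (u y)
    rw [this.fderiv_eq_zero, norm_zero]
    exact norm_nonneg _
  · have : (fun y ↦ |u y|) =ᶠ[𝓝 x] u :=
      (hu.eventually_const_lt hx).mono fun y hy ↦ abs_of_pos hy
    rw [this.fderiv_eq]

variable [InnerProductSpace ℝ E] [FiniteDimensional ℝ E]

lemma norm_gradient_infDist {F : Set E} (hF : IsClosed F) (hFne : F.Nonempty) {x : E}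
    (hx : x ∉ F) (hd : DifferentiableAt ℝ (infDist · F) x) : ‖∇ (infDist · F) x‖ = 1 := by
  obtain ⟨p, hpF, hp⟩ := hF.exists_infDist_eq_dist hFne x
  have hxp : x - p ≠ 0 := sub_ne_zero.2 fun h ↦ hx (h ▸ hpF)
  have : Nontrivial E := ⟨_, _, hxp⟩
  have hnorm : DifferentiableAt ℝ (‖·‖) (x - p) :=
    (contDiffAt_norm ℝ hxp).differentiableAt one_ne_zero
  have hmin : IsLocalMin (fun y ↦ ‖y - p‖ - infDist y F) x := .of_forall fun y ↦ by
    simp only [← dist_eq_norm, hp, sub_self]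
    exact sub_nonneg.2 (infDist_le_dist_of_mem hpF)
  have heq : fderiv ℝ (infDist · F) x = fderiv ℝ (‖·‖) (x - p) := by
    have h := hmin.fderiv_eq_zero
    rw [fderiv_fun_sub ((differentiableAt_comp_sub p).2 hnorm) hd, fderiv_comp_sub,
      sub_eq_zero] at h
    exact h.symm
  rw [gradient, LinearIsometryEquiv.norm_map, heq, norm_fderiv_norm hnorm]

variable {Ω : Set E} {d u : E → ℝ} {L C : ℝ≥0} {s : ℝ}

lemma fderiv_div_rpow_apply_gradient {x : E} (hu : DifferentiableAt ℝ u x)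
    (hd : DifferentiableAt ℝ d x) (hd0 : 0 < d x) (hgrad : ‖∇ d x‖ = 1) :
    fderiv ℝ (fun y ↦ u y / d y ^ (s - 1)) x (∇ d x) =
      fderiv ℝ u x (∇ d x) / d x ^ (s - 1) - (s - 1) * (u x / d x ^ s) := by
  have hself : fderiv ℝ d x (∇ d x) = 1 := by
    rw [← inner_gradient_left (𝕜 := ℝ), real_inner_self_eq_norm_sq, hgrad, one_pow]
  have hpow : d x ^ (s - 1) ≠ 0 := (Real.rpow_pos_of_pos hd0 _).ne'
  have hder := hu.hasFDerivAt.fun_mul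
    ((hasDerivAt_inv hpow).comp_hasFDerivAt x (hd.hasFDerivAt.rpow_const (.inl hd0.ne')))
  have hs : d x ^ s = d x ^ (s - 1) * d x := by
    rw [← Real.rpow_add_one hd0.ne', sub_add_cancel]
  rw [(hder.congr_of_eventuallyEq (.of_forall fun y ↦ div_eq_mul_inv _ _)).fderiv, hs]
  simp only [hself, Real.rpow_sub_one hd0.ne' (s - 1), neg_smul, smul_neg, Function.comp_apply,
    add_apply, neg_apply, smul_apply, smul_eq_mul, mul_one]
  field_simp
  ring

lemma fderiv_div_rpow_apply_gradient_le {x : E} (hu : DifferentiableAt ℝ u x)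
    (hd : DifferentiableAt ℝ d x) (hd0 : x ∈ tsupport u → 0 < d x)
    (hgrad : x ∈ tsupport u → ‖∇ d x‖ = 1) :
    fderiv ℝ (fun y ↦ u y / d y ^ (s - 1)) x (∇ d x) ≤
      ‖fderiv ℝ u x‖ / d x ^ (s - 1) - (s - 1) * (u x / d x ^ s) := by
  by_cases hx : x ∈ tsupport u
  · rw [fderiv_div_rpow_apply_gradient hu hd (hd0 hx) (hgrad hx)]
    have hle : fderiv ℝ u x (∇ d x) ≤ ‖fderiv ℝ u x‖ := by
      simpa only [hgrad hx, mul_one] using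
        (le_abs_self _).trans ((fderiv ℝ u x).le_opNorm (∇ d x))
    gcongr
    exact Real.rpow_nonneg (hd0 hx).le _
  · have : (fun y ↦ u y / d y ^ (s - 1)) =ᶠ[𝓝 x] fun _ ↦ 0 :=
      (notMem_tsupport_iff_eventuallyEq.1 hx).mono fun y hy ↦ by
        simp only [hy, Pi.zero_apply, zero_div]
    rw [this.fderiv_eq, fderiv_of_notMem_tsupport ℝ hx, image_eq_zero_of_notMem_tsupport hx]
    simp

variable [MeasurableSpace E] [BorelSpace E]

lemma integrable_norm_fderiv_div_rpow (hu : LipschitzWith C u) (huc : HasCompactSupport u)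
    (hd : Continuous d) (hd0 : ∀ x ∈ tsupport u, 0 < d x) (p : ℝ) :
    Integrable fun x ↦ ‖fderiv ℝ u x‖ / d x ^ p :=
  integrable_div_rpow_of_isCompact huc (integrable_norm_fderiv hu huc)
    (fun x hx ↦ by rw [fderiv_of_notMem_tsupport ℝ hx, norm_zero]) hd.continuousOn hd0 p

lemma mul_integral_div_rpow_le_of_nonneg (hΩ : IsOpen Ω) (hd : LipschitzWith L d)
    (hd0 : ∀ x ∈ Ω, 0 < d x) (hgrad : ∀ᵐ x, x ∈ Ω → ‖∇ d x‖ = 1)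
    (hsuper : IsDistribSuperharmonicOn d Ω) (hs : 1 ≤ s) (hu : LipschitzWith C u)
    (huc : HasCompactSupport u) (huΩ : tsupport u ⊆ Ω) (hu0 : ∀ x, 0 ≤ u x) :
    (s - 1) * ∫ x, u x / d x ^ s ≤ ∫ x, ‖fderiv ℝ u x‖ / d x ^ (s - 1) := by
  set φ : E → ℝ := fun x ↦ u x / d x ^ (s - 1) with hφ_def
  have hdpos (x : E) (hx : x ∈ tsupport u) : 0 < d x := hd0 x (huΩ hx)
  obtain ⟨D, hφ⟩ := exists_lipschitzWith_div_rpow (sub_nonneg.2 hs) hu huc hd hdpos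
  have hφu : tsupport φ ⊆ tsupport u :=
    closure_mono fun x hx hux ↦ hx (by simp only [hφ_def, hux, zero_div])
  have hφc : HasCompactSupport φ := huc.of_isClosed_subset (isClosed_tsupport _) hφu
  have hφ0 (x : E) : 0 ≤ φ x := by
    by_cases hx : x ∈ tsupport u
    · exact div_nonneg (hu0 x) (Real.rpow_nonneg (hdpos x hx).le _)
    · exact (image_eq_zero_of_notMem_tsupport fun h ↦ hx (hφu h)).ge
  have hint_φ : Integrable fun x ↦ fderiv ℝ φ x (∇ d x) :=
    ((integrable_norm_fderiv hφ hφc).mul_const L).mono'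
      (measurable_fderiv_apply_gradient φ d).aestronglyMeasurable
      (.of_forall fun x ↦ norm_fderiv_apply_gradient_le hd le_rfl)
  have hint_u : Integrable fun x ↦ u x / d x ^ s :=
    integrable_div_rpow_of_isCompact huc (hu.continuous.integrable_of_hasCompactSupport huc)
      (fun x ↦ image_eq_zero_of_notMem_tsupport) hd.continuous.continuousOn hdpos s
  have hint_du : Integrable fun x ↦ ‖fderiv ℝ u x‖ / d x ^ (s - 1) :=
    integrable_norm_fderiv_div_rpow hu huc hd.continuous hdpos (s - 1)
  rw [← integral_const_mul, ← sub_nonneg, ← integral_sub hint_du (hint_u.const_mul _)]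
  refine (integral_fderiv_apply_gradient_nonneg hΩ hd hsuper hφ hφc (hφu.trans huΩ) hφ0).trans
    (integral_mono_ae hint_φ (hint_du.sub (hint_u.const_mul _)) ?_)
  filter_upwards [hu.ae_differentiableAt, hd.ae_differentiableAt, hgrad] with x hux hdx hgx
  exact fderiv_div_rpow_apply_gradient_le hux hdx (hdpos x) fun hx ↦ hgx (huΩ hx)

theorem mul_integral_abs_div_rpow_le (hΩ : IsOpen Ω) (hd : LipschitzWith L d)
    (hd0 : ∀ x ∈ Ω, 0 < d x) (hgrad : ∀ᵐ x, x ∈ Ω → ‖∇ d x‖ = 1)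
    (hsuper : IsDistribSuperharmonicOn d Ω) (hs : 1 ≤ s) (hu : LipschitzWith C u)
    (huc : HasCompactSupport u) (huΩ : tsupport u ⊆ Ω) :
    (s - 1) * ∫ x, |u x| / d x ^ s ≤ ∫ x, ‖fderiv ℝ u x‖ / d x ^ (s - 1) := by
  have habs : tsupport (fun x ↦ |u x|) ⊆ tsupport u :=
    closure_mono fun x hx hux ↦ hx (by simp only [hux, abs_zero])
  have hdpos (x : E) (hx : x ∈ tsupport u) : 0 < d x := hd0 x (huΩ hx)
  have hlip : LipschitzWith (1 * C) fun x ↦ |u x| := lipschitzWith_one_norm.comp hu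
  refine (mul_integral_div_rpow_le_of_nonneg hΩ hd hd0 hgrad hsuper hs hlip huc.norm
    (habs.trans huΩ) fun x ↦ abs_nonneg (u x)).trans <|
    integral_mono (integrable_norm_fderiv_div_rpow hlip huc.norm hd.continuous
      (fun x hx ↦ hdpos x (habs hx)) _)
    (integrable_norm_fderiv_div_rpow hu huc hd.continuous hdpos _) fun x ↦ ?_
  by_cases hx : x ∈ tsupport u
  · exact div_le_div_of_nonneg_right (norm_fderiv_abs_le hu.continuous.continuousAt)
      (Real.rpow_nonneg (hdpos x hx).le _)
  · simp only [fderiv_of_notMem_tsupport ℝ hx, fderiv_of_notMem_tsupport ℝ fun h ↦ hx (habs h),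
      le_refl]

end Hardy

section Scaling

variable {E F : Type*} [NormedAddCommGroup E] [NormedSpace ℝ E] [FiniteDimensional ℝ E]
  [MeasurableSpace E] [BorelSpace E] {μ : Measure E} [μ.IsAddHaarMeasure]
  [NormedAddCommGroup F] [NormedSpace ℝ F] {T : ℝ}

lemma integral_comp_add_smul (f : E → F) (y : E) (hT : 0 < T) :
    ∫ z, f (y + T • z) ∂μ = (T ^ Module.finrank ℝ E)⁻¹ • ∫ x, f x ∂μ := by
  rw [Measure.integral_comp_smul_of_nonneg μ (fun w ↦ f (y + w)) T (hR := hT.le),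
    integral_add_left_eq_self]

lemma setIntegral_closedBall_comp_add_smul (f : E → F) (y q : E) (Λ : ℝ) (hT : 0 < T) :
    ∫ z in closedBall q Λ, f (y + T • z) ∂μ =
      (T ^ Module.finrank ℝ E)⁻¹ • ∫ x in closedBall (y + T • q) (T * Λ), f x ∂μ := by
  have hpre : (fun z ↦ y + T • z) ⁻¹' closedBall (y + T • q) (T * Λ) = closedBall q Λ := by
    ext z
    simp only [mem_preimage, mem_closedBall, dist_add_left, dist_smul₀, Real.norm_of_nonneg hT.le,
      mul_le_mul_iff_right₀ hT]
  rw [← integral_indicator measurableSet_closedBall, ← integral_indicator measurableSet_closedBall,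
    ← integral_comp_add_smul _ y hT, ← hpre]
  rfl

end Scaling

section MeanValue

variable {E : Type*} [NormedAddCommGroup E] {p : E} {t : ℝ}

lemma lipschitzWith_sq_sub_min_norm_sq (p : E) (ht : 0 ≤ t) :
    LipschitzWith (2 * t).toNNReal fun x ↦ t ^ 2 - min ‖x - p‖ t ^ 2 := by
  have hmin : LipschitzWith 1 fun x ↦ min ‖x - p‖ t :=
    ((lipschitzWith_one_norm.comp (IsometryEquiv.subRight p).isometry.lipschitz).weaken
      (mul_one _).le).min_const t
  refine .of_dist_le' fun x y ↦ ?_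
  have hxy := hmin.dist_le_mul x y
  rw [NNReal.coe_one, one_mul, Real.dist_eq] at hxy
  have hsum : |min ‖y - p‖ t + min ‖x - p‖ t| ≤ 2 * t := by
    rw [abs_of_nonneg (by positivity)]
    linarith [min_le_right ‖y - p‖ t, min_le_right ‖x - p‖ t]
  rw [Real.dist_eq, sub_sub_sub_cancel_left, sq_sub_sq, abs_mul, abs_sub_comm]
  gcongr

lemma tsupport_sq_sub_min_norm_sq_subset (p : E) (t : ℝ) :
    tsupport (fun x ↦ t ^ 2 - min ‖x - p‖ t ^ 2) ⊆ closedBall p t := by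
  refine closure_minimal (Function.support_subset_iff'.2 fun x hx ↦ ?_) isClosed_closedBall
  rw [mem_closedBall, dist_eq_norm, not_le] at hx
  rw [min_eq_right hx.le, sub_self]

variable [InnerProductSpace ℝ E]

lemma fderiv_sq_sub_min_norm_sq_apply {x : E} (hx : x ∉ sphere p t) (v : E) :
    fderiv ℝ (fun x ↦ t ^ 2 - min ‖x - p‖ t ^ 2) x v =
      (closedBall p t).indicator (fun x ↦ -2 * inner ℝ (x - p) v) x := by
  rcases lt_or_gt_of_ne (mem_sphere.not.1 hx) with hlt | hgt
  · have heq : (fun x ↦ t ^ 2 - min ‖x - p‖ t ^ 2) =ᶠ[𝓝 x] fun x ↦ t ^ 2 - ‖x - p‖ ^ 2 := by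
      filter_upwards [isOpen_ball.mem_nhds (mem_ball.2 hlt)] with y hy
      rw [min_eq_left (dist_eq_norm y p ▸ (mem_ball.1 hy).le)]
    have hderiv := (((hasFDerivAt_id (𝕜 := ℝ) x).sub_const p).norm_sq).const_sub (t ^ 2)
    rw [(hderiv.congr_of_eventuallyEq heq).fderiv, indicator_of_mem (mem_closedBall.2 hlt.le)]
    simp [inner_sub_left]
  · have hx' : x ∉ closedBall p t := fun h ↦ (mem_closedBall.1 h).not_gt hgt
    rw [fderiv_of_notMem_tsupport ℝ fun h ↦ hx' (tsupport_sq_sub_min_norm_sq_subset p t h),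
      indicator_of_notMem hx', zero_apply]

variable [FiniteDimensional ℝ E] [MeasurableSpace E] [BorelSpace E]
  {Ω : Set E} {d : E → ℝ} {L : ℝ≥0}

lemma setIntegral_closedBall_fderiv_apply_sub_nonpos (hΩ : IsOpen Ω) (hd : LipschitzWith L d)
    (hsuper : IsDistribSuperharmonicOn d Ω) (ht : 0 < t) (hp : closedBall p t ⊆ Ω) :
    ∫ x in closedBall p t, fderiv ℝ d x (x - p) ≤ 0 := by
  have hsupp := tsupport_sq_sub_min_norm_sq_subset p t
  have htest := integral_fderiv_apply_gradient_nonneg hΩ hd hsuper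
    (lipschitzWith_sq_sub_min_norm_sq p ht.le)
    ((isCompact_closedBall p t).of_isClosed_subset (isClosed_tsupport _) hsupp) (hsupp.trans hp)
    fun x ↦ sub_nonneg.2 <| pow_le_pow_left₀ (by positivity) (min_le_right _ _) 2
  have hae : (fun x ↦ fderiv ℝ (fun x ↦ t ^ 2 - min ‖x - p‖ t ^ 2) x (∇ d x)) =ᵐ[volume]
      (closedBall p t).indicator fun x ↦ -2 * fderiv ℝ d x (x - p) := by
    filter_upwards [measure_eq_zero_iff_ae_notMem.1 (Measure.addHaar_sphere_of_ne_zero volume p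
      ht.ne')] with x hx
    simp only [fderiv_sq_sub_min_norm_sq_apply hx, real_inner_comm, inner_gradient_left,
      indicator]
  rw [integral_congr_ae hae, integral_indicator measurableSet_closedBall,
    integral_const_mul] at htest
  linarith

lemma setIntegral_unitBall_fderiv_comp_nonpos (hΩ : IsOpen Ω) (hd : LipschitzWith L d)
    (hsuper : IsDistribSuperharmonicOn d Ω) (ht : 0 < t) (hp : closedBall p t ⊆ Ω) :
    ∫ z in closedBall (0 : E) 1, fderiv ℝ d (p + t • z) z ≤ 0 := by
  have hcov := setIntegral_closedBall_comp_add_smul (μ := volume)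
    (fun x ↦ fderiv ℝ d x (x - p)) p 0 1 ht
  simp only [add_sub_cancel_left, map_smul, integral_smul, smul_zero, add_zero, mul_one] at hcov
  have hscaled := smul_nonpos_of_nonneg_of_nonpos (a := (t ^ Module.finrank ℝ E)⁻¹)
    (by positivity) (setIntegral_closedBall_fderiv_apply_sub_nonpos hΩ hd hsuper ht hp)
  rw [← hcov, smul_eq_mul] at hscaled
  exact nonpos_of_mul_nonpos_right hscaled ht

lemma hasDerivAt_setIntegral_unitBall_comp_smul (hd : LipschitzWith L d) (p : E) (ht : 0 < t) :
    HasDerivAt (fun t : ℝ ↦ ∫ z in closedBall (0 : E) 1, d (p + t • z))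
      (∫ z in closedBall (0 : E) 1, fderiv ℝ d (p + t • z) z) t := by
  have hcont := hd.continuous
  refine (hasDerivAt_integral_of_dominated_loc_of_lip (bound := fun _ ↦ (L : ℝ))
    (F := fun t z ↦ d (p + t • z)) (s := univ) univ_mem (.of_forall fun t ↦ ?_) ?_ ?_ ?_ ?_ ?_).2
  · exact (by fun_prop : Continuous fun z ↦ d (p + t • z)).aestronglyMeasurable
  · exact (by fun_prop : Continuous fun z ↦ d (p + t • z)).continuousOn.integrableOn_compact
      (isCompact_closedBall _ _)
  · have hmeas : Measurable fun z ↦ fderiv ℝ d (p + t • z) :=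
      (measurable_fderiv ℝ d).comp (by fun_prop)
    exact (isBoundedBilinearMap_apply.continuous.measurable.comp
      (hmeas.prodMk measurable_id)).aestronglyMeasurable
  · refine ae_restrict_of_forall_mem measurableSet_closedBall fun z hz ↦ ?_
    refine (LipschitzWith.of_dist_le_mul fun a b ↦ ?_).lipschitzOnWith
    calc dist (d (p + a • z)) (d (p + b • z)) ≤ L * (dist a b * ‖z‖) := by
          simpa [dist_eq_norm, ← sub_smul, norm_smul] using hd.dist_le_mul (p + a • z) (p + b • z)
      _ ≤ L * (dist a b * 1) := by gcongr; exact mem_closedBall_zero_iff.1 hz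
      _ = _ := by simp
  · exact integrableOn_const measure_closedBall_lt_top.ne
  · have hpre : ∀ᵐ z : E, DifferentiableAt ℝ d (p + t • z) := by
      have hquasi : Measure.QuasiMeasurePreserving (fun z : E ↦ p + t • z) :=
        (measurePreserving_add_left volume p).quasiMeasurePreserving.comp
          (Measure.quasiMeasurePreserving_smul volume ht.ne')
      exact hquasi.ae hd.ae_differentiableAt
    filter_upwards [ae_restrict_of_ae hpre] with z hz
    have hline : HasDerivAt (fun t : ℝ ↦ p + t • z) z t := by
      simpa using ((hasDerivAt_id t).smul_const z).const_add p
    exact hz.hasFDerivAt.comp_hasDerivAt t hline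

lemma setIntegral_closedBall_le_of_isDistribSuperharmonicOn (hΩ : IsOpen Ω)
    (hd : LipschitzWith L d) (hsuper : IsDistribSuperharmonicOn d Ω) {ρ : ℝ} (hρ : 0 < ρ)
    (hp : ball p ρ ⊆ Ω) :
    ∫ x in closedBall p ρ, d x ≤ volume.real (closedBall p ρ) * d p := by
  have hcont : Continuous fun t : ℝ ↦ ∫ z in closedBall (0 : E) 1, d (p + t • z) := by
    have := hd.continuous
    exact continuous_parametric_integral_of_continuous (by fun_prop) (isCompact_closedBall _ _)
  have hderiv {t : ℝ} (ht : 0 < t) := hasDerivAt_setIntegral_unitBall_comp_smul hd p ht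
  have hanti : AntitoneOn (fun t : ℝ ↦ ∫ z in closedBall (0 : E) 1, d (p + t • z))
      (Icc 0 ρ) := by
    refine antitoneOn_of_deriv_nonpos (convex_Icc 0 ρ) hcont.continuousOn ?_ ?_ <;>
      rw [interior_Icc]
    · exact fun t ht ↦ (hderiv ht.1).differentiableAt.differentiableWithinAt
    · intro t ht
      rw [(hderiv ht.1).deriv]
      exact setIntegral_unitBall_fderiv_comp_nonpos hΩ hd hsuper ht.1
        ((closedBall_subset_ball ht.2).trans hp)
  have hmean := hanti (left_mem_Icc.2 hρ.le) (right_mem_Icc.2 hρ.le) hρ.le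
  have hcov (f : E → ℝ) := setIntegral_closedBall_comp_add_smul (μ := volume) f p 0 1 hρ
  simp only [smul_zero, add_zero, mul_one, zero_smul] at hcov hmean
  rw [hcov d, hcov fun _ ↦ d p] at hmean
  simpa using le_of_smul_le_smul_left hmean (by positivity)

end MeanValue

section TouchingBall

variable {E : Type*} [NormedAddCommGroup E] {F : Set E} {e y : E} {r : ℝ}

lemma exists_infDist_add_smul_eq [NormedSpace ℝ E] [ProperSpace E] (hF : IsClosed F)
    (hFne : F.Nonempty) (hF' : F ≠ univ) :
    ∃ y ∈ F, ∃ e : E, ‖e‖ = 1 ∧ ∃ r > 0, infDist (y + r • e) F = r := by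
  obtain ⟨x, hx⟩ := (ne_univ_iff_exists_notMem F).1 hF'
  obtain ⟨y, hy, hxy⟩ := hF.exists_infDist_eq_dist hFne x
  have hr : 0 < ‖x - y‖ := norm_sub_pos_iff.2 (ne_of_mem_of_not_mem hy hx).symm
  refine ⟨y, hy, ‖x - y‖⁻¹ • (x - y), norm_smul_inv_norm (norm_pos_iff.1 hr), ‖x - y‖, hr, ?_⟩
  rw [smul_inv_smul₀ hr.ne', add_sub_cancel, hxy, dist_eq_norm]

lemma infDist_add_smul_eq_of_le [NormedSpace ℝ E] (hy : y ∈ F) (he : ‖e‖ = 1)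
    (hr : infDist (y + r • e) F = r) {t : ℝ} (ht : 0 ≤ t) (htr : t ≤ r) :
    infDist (y + t • e) F = t := by
  refine le_antisymm ((infDist_le_dist_of_mem hy).trans_eq ?_) ?_
  · rw [dist_self_add_left, norm_smul, he, mul_one, Real.norm_of_nonneg ht]
  · have h := infDist_le_infDist_add_dist (s := F) (x := y + r • e) (y := y + t • e)
    rw [hr, dist_add_left, dist_eq_norm, ← sub_smul, norm_smul, he, mul_one,
      Real.norm_of_nonneg (sub_nonneg.2 htr)] at h
    linarith

variable [InnerProductSpace ℝ E]

lemma inner_sub_sq_div_le_infDist (he : ‖e‖ = 1) (hr0 : 0 < r) (hr : infDist (y + r • e) F = r)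
    (w : E) : inner ℝ e w - ‖w‖ ^ 2 / (2 * r) ≤ infDist (y + w) F := by
  have hdist : r - ‖r • e - w‖ ≤ infDist (y + w) F := by
    have h := infDist_le_infDist_add_dist (s := F) (x := y + r • e) (y := y + w)
    rw [hr, dist_add_left, dist_eq_norm] at h
    linarith
  refine le_trans ?_ hdist
  have hsq : ‖r • e - w‖ ^ 2 = r ^ 2 - 2 * r * inner ℝ e w + ‖w‖ ^ 2 := by
    rw [norm_sub_sq_real, norm_smul, he, real_inner_smul_left, mul_one, Real.norm_of_nonneg hr0.le]
    ring
  have hamgm : ‖r • e - w‖ ≤ (‖r • e - w‖ ^ 2 + r ^ 2) / (2 * r) := by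
    rw [le_div_iff₀ (by positivity)]
    linarith [two_mul_le_add_sq ‖r • e - w‖ r]
  calc inner ℝ e w - ‖w‖ ^ 2 / (2 * r) = r - (‖r • e - w‖ ^ 2 + r ^ 2) / (2 * r) := by
        rw [hsq]; field_simp; ring
    _ ≤ r - ‖r • e - w‖ := by linarith

lemma exists_forall_add_smul_mem_closedBall {K : Set E} (hK : IsCompact K) (he : ‖e‖ = 1)
    (hK0 : ∀ z ∈ K, 0 < inner ℝ e z) :
    ∃ Λ ≥ 1, ∀ z ∈ K, ∀ τ ∈ Icc (0 : ℝ) 1, z + τ • e ∈ closedBall (Λ • e) Λ := by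
  obtain ⟨c, hc, hcK⟩ := hK.exists_forall_le' (a := 0)
    (continuous_const.inner continuous_id).continuousOn hK0
  obtain ⟨R, hR⟩ := hK.isBounded.exists_norm_le
  refine ⟨R ^ 2 / (2 * c) + 1, le_add_of_nonneg_left (by positivity), fun z hz τ hτ ↦ ?_⟩
  set Λ := R ^ 2 / (2 * c) + 1 with hΛ
  have hΛ1 : 1 ≤ Λ := le_add_of_nonneg_left (by positivity)
  have hsq : ‖z + τ • e - Λ • e‖ ^ 2 =
      ‖z‖ ^ 2 - 2 * (Λ - τ) * inner ℝ e z + (Λ - τ) ^ 2 := by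
    rw [add_sub_assoc, ← sub_smul, norm_add_sq_real, norm_smul, he, real_inner_smul_right,
      real_inner_comm, mul_one, Real.norm_eq_abs, sq_abs]
    ring
  have hnorm : ‖z‖ ^ 2 ≤ 2 * (Λ - τ) * c := calc
    ‖z‖ ^ 2 ≤ R ^ 2 := by gcongr; exact hR z hz
    _ = 2 * (Λ - 1) * c := by rw [hΛ]; field_simp; ring
    _ ≤ 2 * (Λ - τ) * c := by gcongr; exact hτ.2
  have hinner : 2 * (Λ - τ) * c ≤ 2 * (Λ - τ) * inner ℝ e z :=
    mul_le_mul_of_nonneg_left (hcK z hz) (by linarith [hτ.2])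
  rw [mem_closedBall, dist_eq_norm, ← sq_le_sq₀ (norm_nonneg _) (by linarith), hsq]
  nlinarith [hτ.1, hτ.2]

end TouchingBall

section BlowUp

variable {E : Type*} [NormedAddCommGroup E]

lemma setIntegral_closedBall_clm [NormedSpace ℝ E] [MeasurableSpace E] [BorelSpace E]
    [FiniteDimensional ℝ E] (μ : Measure E) [μ.IsAddHaarMeasure] (ℓ : E →L[ℝ] ℝ) (q : E) (R : ℝ) :
    ∫ z in closedBall q R, ℓ z ∂μ = μ.real (closedBall q R) * ℓ q := by
  let g := (closedBall q R).indicator fun z ↦ ℓ z - ℓ q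
  have hodd z : g (q + q - z) = -g z := by
    have hmem : q + q - z ∈ closedBall q R ↔ z ∈ closedBall q R := by
      rw [mem_closedBall_iff_norm, mem_closedBall_iff_norm', add_sub_assoc, add_sub_cancel_left]
    by_cases hz : z ∈ closedBall q R
    · simp only [g, indicator_of_mem hz, indicator_of_mem (hmem.2 hz), map_sub, map_add]
      ring
    · simp [g, hz, hmem.not.2 hz]
  have hzero : ∫ z, g z ∂μ = 0 := by
    have h := integral_sub_left_eq_self g μ (q + q)
    simp only [hodd, integral_neg] at h
    linarith
  rw [integral_indicator measurableSet_closedBall, integral_sub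
    (ℓ.continuous.continuousOn.integrableOn_compact (isCompact_closedBall _ _))
    (integrableOn_const measure_closedBall_lt_top.ne), setIntegral_const, smul_eq_mul] at hzero
  exact sub_eq_zero.1 hzero

variable [InnerProductSpace ℝ E] {F : Set E} {e y : E} {r T Λ : ℝ}

lemma inner_sub_le_infDist_add_smul_div (he : ‖e‖ = 1) (hr0 : 0 < r)
    (hr : infDist (y + r • e) F = r) (hT : 0 < T) (hΛ : 0 < Λ) {w : E}
    (hw : w ∈ closedBall (Λ • e) Λ) :
    inner ℝ e w - 2 * T * Λ ^ 2 / r ≤ infDist (y + T • w) F / T := by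
  have hnorm : ‖w‖ ≤ 2 * Λ := by
    have h := norm_le_norm_add_norm_sub (Λ • e) w
    rw [norm_smul, he, mul_one, Real.norm_of_nonneg hΛ.le] at h
    linarith [mem_closedBall_iff_norm'.1 hw]
  rw [le_div_iff₀ hT]
  refine le_trans ?_ (inner_sub_sq_div_le_infDist he hr0 hr (T • w))
  rw [real_inner_smul_right, norm_smul, Real.norm_of_nonneg hT.le, sub_mul, mul_comm _ T]
  gcongr
  calc (T * ‖w‖) ^ 2 / (2 * r) ≤ (T * (2 * Λ)) ^ 2 / (2 * r) := by gcongr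
    _ = 2 * T * Λ ^ 2 / r * T := by field_simp

variable [FiniteDimensional ℝ E] [MeasurableSpace E] [BorelSpace E]

lemma setIntegral_infDist_add_smul_div_le {Ω : Set E} (hΩ : IsOpen Ω)
    (hsuper : IsDistribSuperharmonicOn (infDist · Ωᶜ) Ω) (hy : y ∈ Ωᶜ) (he : ‖e‖ = 1)
    (hr : infDist (y + r • e) Ωᶜ = r) (hT : 0 < T) (hΛ : 0 < Λ) (hTΛ : T * Λ ≤ r) :
    ∫ w in closedBall (Λ • e) Λ, infDist (y + T • w) Ωᶜ / T ≤
      ∫ w in closedBall (Λ • e) Λ, inner ℝ e w := by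
  set p := y + T • Λ • e with hp
  have hTΛ0 : 0 < T * Λ := mul_pos hT hΛ
  have hdp : infDist p Ωᶜ = T * Λ := by
    rw [hp, smul_smul]
    exact infDist_add_smul_eq_of_le hy he hr hTΛ0.le hTΛ
  have hball : ball p (T * Λ) ⊆ Ω := by
    rw [← hdp, ← disjoint_compl_right_iff_subset]
    exact disjoint_ball_infDist
  have hmean := setIntegral_closedBall_le_of_isDistribSuperharmonicOn hΩ
    (lipschitz_infDist_pt Ωᶜ) hsuper hTΛ0 hball
  have hscale (f : E → ℝ) := setIntegral_closedBall_comp_add_smul (μ := volume) f y (Λ • e) Λ hT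
  calc ∫ w in closedBall (Λ • e) Λ, infDist (y + T • w) Ωᶜ / T
      = (T ^ Module.finrank ℝ E)⁻¹ * (∫ x in closedBall p (T * Λ), infDist x Ωᶜ) / T := by
        rw [integral_div, hscale (infDist · Ωᶜ), smul_eq_mul]
    _ ≤ (T ^ Module.finrank ℝ E)⁻¹ * (volume.real (closedBall p (T * Λ)) * (T * Λ)) / T := by
        rw [hdp] at hmean
        gcongr
    _ = volume.real (closedBall (Λ • e) Λ) * Λ := by
        have hvol := hscale fun _ ↦ 1
        simp only [setIntegral_const, smul_eq_mul, mul_one] at hvol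
        rw [hvol, ← hp]
        field_simp
    _ = ∫ w in closedBall (Λ • e) Λ, inner ℝ e w := by
        have h := setIntegral_closedBall_clm volume (innerSL ℝ e) (Λ • e) Λ
        simp only [innerSL_apply_apply, real_inner_smul_right, real_inner_self_eq_norm_sq, he,
          one_pow, mul_one] at h
        exact h.symm

lemma setIntegral_infDist_add_smul_div_sub_inner_le {Ω : Set E} (hΩ : IsOpen Ω)
    (hsuper : IsDistribSuperharmonicOn (infDist · Ωᶜ) Ω) (hy : y ∈ Ωᶜ) (he : ‖e‖ = 1)
    (hr0 : 0 < r) (hr : infDist (y + r • e) Ωᶜ = r) (hT : 0 < T) (hΛ : 0 < Λ) (hTΛ : T * Λ ≤ r)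
    {τ : ℝ} (hτ : 2 * T * Λ ^ 2 / r = τ) {K : Set E}
    (hKB : ∀ z ∈ K, z + τ • e ∈ closedBall (Λ • e) Λ) :
    ∫ z in K, (infDist (y + T • (z + τ • e)) Ωᶜ / T - inner ℝ e z) ≤
      volume.real (closedBall (Λ • e) Λ) * τ := by
  set B := closedBall (Λ • e) Λ
  let D w := infDist (y + T • w) Ωᶜ / T
  have hD : Continuous D := by fun_prop
  let g w := D w - inner ℝ e w + τ
  have hint {f : E → ℝ} (hf : Continuous f) : IntegrableOn f B :=
    hf.continuousOn.integrableOn_compact (isCompact_closedBall _ _)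
  have hg : IntegrableOn g B := hint (by fun_prop)
  have hg0 w (hw : w ∈ B) : 0 ≤ g w := by
    linarith [hτ ▸ inner_sub_le_infDist_add_smul_div he hr0 hr hT hΛ hw]
  have htrans := measurePreserving_add_right (volume : Measure E) (τ • e)
  have hemb := measurableEmbedding_addRight (τ • e)
  have hinner z : inner ℝ e (z + τ • e) = inner ℝ e z + τ := by
    rw [inner_add_right, real_inner_smul_right, real_inner_self_eq_norm_sq, he, one_pow, mul_one]
  calc ∫ z in K, (D (z + τ • e) - inner ℝ e z)
      = ∫ z in K, g (z + τ • e) := by simp only [g, hinner, sub_add_eq_sub_sub, sub_add_cancel]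
    _ ≤ ∫ z in (· + τ • e) ⁻¹' B, g (z + τ • e) :=
        setIntegral_mono_set ((htrans.integrableOn_comp_preimage hemb).2 hg)
          ((ae_restrict_mem (measurableSet_closedBall.preimage htrans.measurable)).mono
            fun z hz ↦ hg0 _ hz) (Eventually.of_forall hKB)
    _ = ∫ w in B, g w := htrans.setIntegral_preimage_emb hemb g B
    _ = (∫ w in B, D w) - (∫ w in B, inner ℝ e w) + volume.real B * τ := by
        rw [integral_add (hint (by fun_prop)) (hint continuous_const),
          integral_sub (hint hD) (hint (by fun_prop)), setIntegral_const, smul_eq_mul]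
    _ ≤ volume.real B * τ := by
        linarith [setIntegral_infDist_add_smul_div_le hΩ hsuper hy he hr hT hΛ hTΛ]

lemma exists_blowUp {Ω : Set E} (hΩ : IsOpen Ω) (hΩne : Ω.Nonempty) (hΩuniv : Ω ≠ univ)
    (hsuper : IsDistribSuperharmonicOn (infDist · Ωᶜ) Ω) :
    ∃ e : E, ‖e‖ = 1 ∧ ∀ K : Set E, IsCompact K → (∀ z ∈ K, 0 < inner ℝ e z) → ∀ δ > 0,
      ∃ y : E, ∃ T > 0, (∀ z ∈ K, inner ℝ e z ≤ infDist (y + T • z) Ωᶜ / T) ∧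
        ∫ z in K, (infDist (y + T • z) Ωᶜ / T - inner ℝ e z) ≤ δ := by
  obtain ⟨y, hy, e, he, r, hr0, hr⟩ := exists_infDist_add_smul_eq hΩ.isClosed_compl
    (nonempty_compl.2 hΩuniv) (compl_ne_univ.2 hΩne)
  refine ⟨e, he, fun K hK hK0 δ hδ ↦ ?_⟩
  obtain ⟨Λ, hΛ1, hKB⟩ := exists_forall_add_smul_mem_closedBall hK he hK0
  have hΛ : 0 < Λ := one_pos.trans_le hΛ1
  obtain ⟨τ, hτ0, hτ1, hτδ⟩ : ∃ τ > 0, τ ≤ 1 ∧ volume.real (closedBall (Λ • e) Λ) * τ ≤ δ := by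
    have hV : 0 < volume.real (closedBall (Λ • e) Λ) + 1 := by positivity
    refine ⟨min 1 (δ / (volume.real (closedBall (Λ • e) Λ) + 1)), by positivity,
      min_le_left _ _, ?_⟩
    calc _ ≤ (volume.real (closedBall (Λ • e) Λ) + 1) *
          (δ / (volume.real (closedBall (Λ • e) Λ) + 1)) := by
          gcongr
          · exact le_add_of_nonneg_right zero_le_one
          · exact min_le_right _ _
      _ = δ := mul_div_cancel₀ _ hV.ne'
  have hT : 0 < τ * r / (2 * Λ ^ 2) := by positivity
  set T := τ * r / (2 * Λ ^ 2) with hTdef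
  have hTτ : 2 * T * Λ ^ 2 / r = τ := by rw [hTdef]; field_simp
  have hTΛ : T * Λ ≤ r := by
    rw [hTdef, div_mul_eq_mul_div, div_le_iff₀ (by positivity)]
    nlinarith [mul_pos hr0 hΛ]
  replace hKB z (hz : z ∈ K) := hKB z hz τ ⟨hτ0.le, hτ1⟩
  have hshift (z : E) : y + T • τ • e + T • z = y + T • (z + τ • e) := by
    rw [smul_add, add_assoc, add_comm (T • z)]
  simp only [gt_iff_lt]
  refine ⟨y + T • τ • e, T, hT, fun z hz ↦ ?_, ?_⟩ <;> simp only [hshift]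
  · have h := hTτ ▸ inner_sub_le_infDist_add_smul_div he hr0 hr hT hΛ (hKB z hz)
    rwa [inner_add_right, real_inner_smul_right, real_inner_self_eq_norm_sq, he, one_pow,
      mul_one, add_sub_cancel_right] at h
  · exact (setIntegral_infDist_add_smul_div_sub_inner_le hΩ hsuper hy he hr0 hr hT hΛ hTΛ hTτ
      hKB).trans hτδ

end BlowUp

section Profile

lemma deriv_smoothTransition_nonneg (t : ℝ) : 0 ≤ deriv Real.smoothTransition t :=
  Real.smoothTransition.monotone.deriv_nonneg

lemma hasDerivAt_smoothTransition (t : ℝ) :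
    HasDerivAt Real.smoothTransition (deriv Real.smoothTransition t) t :=
  (Real.smoothTransition.contDiff.differentiable (n := 1) one_ne_zero t).hasDerivAt

lemma deriv_smoothTransition_eq_zero {t : ℝ} (ht : t ∉ Icc 0 1) :
    deriv Real.smoothTransition t = 0 := by
  rcases lt_or_ge t 0 with h0 | h0
  · refine (EventuallyEq.deriv_eq ?_).trans (deriv_const t 0)
    filter_upwards [Iio_mem_nhds h0] with x hx using Real.smoothTransition.zero_of_nonpos hx.le
  · refine (EventuallyEq.deriv_eq ?_).trans (deriv_const t 1)
    filter_upwards [Ioi_mem_nhds (not_le.1 fun h1 ↦ ht ⟨h0, h1⟩)] with x hx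
      using Real.smoothTransition.one_of_one_le hx.le

lemma continuous_deriv_smoothTransition : Continuous (deriv Real.smoothTransition) :=
  Real.smoothTransition.contDiff.continuous_deriv (n := 1) le_rfl

lemma integrable_deriv_smoothTransition : Integrable (deriv Real.smoothTransition) :=
  continuous_deriv_smoothTransition.integrable_of_hasCompactSupport
    (.intro isCompact_Icc fun _ ↦ deriv_smoothTransition_eq_zero)

lemma integral_deriv_smoothTransition : ∫ t, deriv Real.smoothTransition t = 1 := by
  rw [integral_of_hasDerivAt_of_tendsto (m := 0) (n := 1) hasDerivAt_smoothTransition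
    integrable_deriv_smoothTransition, sub_zero]
  · exact tendsto_const_nhds.congr' <| (eventually_le_atBot 0).mono fun t ht ↦
      (Real.smoothTransition.zero_of_nonpos ht).symm
  · exact tendsto_const_nhds.congr' <| (eventually_ge_atTop 1).mono fun t ht ↦
      (Real.smoothTransition.one_of_one_le ht).symm

/-- A smooth function that rises from `0` to `1` on `[1, 2]` and falls back to `0` on
`[M - 1, M]`. The profiles with large `M` are almost extremal for the Hardy inequality on the
half-line. -/
noncomputable def plateau (M t : ℝ) : ℝ :=
  Real.smoothTransition (t - 1) * Real.smoothTransition (M - t)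

lemma plateau_nonneg (M t : ℝ) : 0 ≤ plateau M t :=
  mul_nonneg (Real.smoothTransition.nonneg _) (Real.smoothTransition.nonneg _)

lemma plateau_eq_zero {M t : ℝ} (ht : t ∉ Icc 1 M) : plateau M t = 0 := by
  simp only [plateau, mul_eq_zero, Real.smoothTransition.zero_iff_nonpos, sub_nonpos]
  by_contra! h
  exact ht ⟨h.1.le, h.2.le⟩

lemma monotone_plateau (t : ℝ) : Monotone (plateau · t) := fun _ _ h ↦
  mul_le_mul_of_nonneg_left (Real.smoothTransition.monotone (sub_le_sub_right h t))
    (Real.smoothTransition.nonneg _)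

lemma tsupport_plateau_subset (M : ℝ) : tsupport (plateau M) ⊆ Icc 1 M :=
  closure_minimal (Function.support_subset_iff'.2 fun _ ↦ plateau_eq_zero) isClosed_Icc

lemma deriv_plateau_eq_zero {M t : ℝ} (ht : t ∉ Icc 1 M) : deriv (plateau M) t = 0 :=
  image_eq_zero_of_notMem_tsupport fun h ↦ ht (tsupport_plateau_subset M (tsupport_deriv_subset h))

lemma isTestFunction_plateau (M : ℝ) : IsTestFunction (Ioi 0) (plateau M) :=
  isTestFunction_of_isCompact ((Real.smoothTransition.contDiff.comp
      (contDiff_id.sub contDiff_const)).mul (Real.smoothTransition.contDiff.comp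
      (contDiff_const.sub contDiff_id))) isCompact_Icc
    (fun _ ht ↦ one_pos.trans_le ht.1) fun _ ↦ plateau_eq_zero

lemma abs_deriv_plateau_le (M t : ℝ) :
    |deriv (plateau M) t| ≤ deriv (plateau M) t + 2 * deriv Real.smoothTransition (M - t) := by
  have hrise := (hasDerivAt_smoothTransition (t - 1)).comp_sub_const t 1
  have hfall := (hasDerivAt_smoothTransition (M - t)).comp_const_sub M t
  have hderiv : deriv (plateau M) t = deriv Real.smoothTransition (t - 1) *
      Real.smoothTransition (M - t) + Real.smoothTransition (t - 1) *
      -deriv Real.smoothTransition (M - t) := (hrise.mul hfall).deriv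
  have hpos : 0 ≤ deriv Real.smoothTransition (t - 1) * Real.smoothTransition (M - t) :=
    mul_nonneg (deriv_smoothTransition_nonneg _) (Real.smoothTransition.nonneg _)
  have hneg : Real.smoothTransition (t - 1) * deriv Real.smoothTransition (M - t) ≤
      deriv Real.smoothTransition (M - t) :=
    mul_le_of_le_one_left (deriv_smoothTransition_nonneg _) (Real.smoothTransition.le_one _)
  rw [hderiv, abs_le]
  constructor <;> linarith [deriv_smoothTransition_nonneg (M - t)]

variable {f : ℝ → ℝ}

lemma IsTestFunction.integrable_div_rpow (hf : IsTestFunction (Ioi 0) f) (p : ℝ) :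
    Integrable fun t ↦ f t / t ^ p :=
  integrable_div_rpow_of_isCompact hf.hasCompactSupport
    (hf.contDiff.continuous.integrable_of_hasCompactSupport hf.hasCompactSupport)
    (fun _ ↦ image_eq_zero_of_notMem_tsupport) continuousOn_id hf.tsupport_subset p

lemma isTestFunction_deriv {Ω : Set ℝ} (hf : IsTestFunction Ω f) :
    IsTestFunction Ω (deriv f) where
  contDiff := (contDiff_infty_iff_deriv.1 hf.contDiff).2
  hasCompactSupport := hf.hasCompactSupport.deriv
  tsupport_subset := (tsupport_deriv_subset (f := f)).trans hf.tsupport_subset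

lemma IsTestFunction.integrable_abs_deriv_div_rpow (hf : IsTestFunction (Ioi 0) f) (p : ℝ) :
    Integrable fun t ↦ |deriv f t| / t ^ p := by
  have hf' := isTestFunction_deriv hf
  exact integrable_div_rpow_of_isCompact hf'.hasCompactSupport
    (hf'.contDiff.continuous.integrable_of_hasCompactSupport hf'.hasCompactSupport).abs
    (fun _ h ↦ by rw [image_eq_zero_of_notMem_tsupport h, abs_zero]) continuousOn_id
    hf'.tsupport_subset p

lemma integral_deriv_div_rpow (hf : IsTestFunction (Ioi 0) f) (a : ℝ) :
    ∫ t, deriv f t / t ^ a = a * ∫ t, f t / t ^ (a + 1) := by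
  have hderiv (t : ℝ) : HasDerivAt (fun t ↦ f t / t ^ a)
      (deriv f t / t ^ a - a * (f t / t ^ (a + 1))) t := by
    by_cases ht : t ∈ tsupport f
    · have ht0 : 0 < t := hf.tsupport_subset ht
      have hpow := (Real.rpow_pos_of_pos ht0 a).ne'
      convert! ((hf.contDiff.differentiable (by simp) t).hasDerivAt).div
        (Real.hasDerivAt_rpow_const (p := a) (.inl ht0.ne')) hpow using 1
      rw [Real.rpow_add_one ht0.ne', Real.rpow_sub_one ht0.ne']
      field_simp
    · have hzero : (fun t ↦ f t / t ^ a) =ᶠ[𝓝 t] fun _ ↦ 0 := by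
        filter_upwards [notMem_tsupport_iff_eventuallyEq.1 ht] with x hx
        rw [hx, Pi.zero_apply, zero_div]
      rw [image_eq_zero_of_notMem_tsupport ht, image_eq_zero_of_notMem_tsupport
        fun h ↦ ht (tsupport_deriv_subset h), zero_div, zero_div, mul_zero, sub_zero]
      exact (hasDerivAt_const t (0 : ℝ)).congr_of_eventuallyEq hzero
  have hintl := (isTestFunction_deriv hf).integrable_div_rpow a
  have hintr := (hf.integrable_div_rpow (a + 1)).const_mul a
  have h := integral_eq_zero_of_hasDerivAt_of_integrable hderiv (hintl.sub hintr)
    (hf.integrable_div_rpow a)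
  rw [integral_sub hintl hintr, integral_const_mul] at h
  exact sub_eq_zero.1 h

lemma integral_plateau_div_rpow_pos {M : ℝ} (hM : 1 < M) (p : ℝ) :
    0 < ∫ t, plateau M t / t ^ p := by
  have hnonneg (t : ℝ) : 0 ≤ plateau M t / t ^ p := by
    by_cases ht : t ∈ Icc 1 M
    · exact div_nonneg (plateau_nonneg M t) (Real.rpow_nonneg (zero_le_one.trans ht.1) p)
    · rw [plateau_eq_zero ht, zero_div]
  have hsupp : Ioo 1 M ⊆ Function.support fun t ↦ plateau M t / t ^ p := fun t ht ↦
    (div_pos (mul_pos (Real.smoothTransition.pos_of_pos (sub_pos.2 ht.1))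
      (Real.smoothTransition.pos_of_pos (sub_pos.2 ht.2)))
      (Real.rpow_pos_of_pos (one_pos.trans ht.1) p)).ne'
  rw [integral_pos_iff_support_of_nonneg hnonneg ((isTestFunction_plateau M).integrable_div_rpow p)]
  exact ((Measure.measure_Ioo_pos volume).2 hM).trans_le (measure_mono hsupp)

lemma abs_deriv_plateau_div_rpow_le {a M : ℝ} (ha : 0 ≤ a) (hM : 1 < M) (t : ℝ) :
    |deriv (plateau M) t| / t ^ a ≤
      deriv (plateau M) t / t ^ a + 2 / (M - 1) ^ a * deriv Real.smoothTransition (M - t) := by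
  have : 0 < (M - 1) ^ a := Real.rpow_pos_of_pos (sub_pos.2 hM) a
  have hS := deriv_smoothTransition_nonneg (M - t)
  by_cases ht : t ∈ Icc 1 M
  · have ht0 : 0 < t := one_pos.trans_le ht.1
    have herror : 2 * deriv Real.smoothTransition (M - t) / t ^ a ≤
        2 * deriv Real.smoothTransition (M - t) / (M - 1) ^ a := by
      rcases lt_or_ge t (M - 1) with hlt | hge
      · rw [deriv_smoothTransition_eq_zero fun h ↦ by linarith [h.2], mul_zero, zero_div, zero_div]
      · have := sub_pos.2 hM
        gcongr
    calc |deriv (plateau M) t| / t ^ a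
        ≤ (deriv (plateau M) t + 2 * deriv Real.smoothTransition (M - t)) / t ^ a := by
          gcongr; exact abs_deriv_plateau_le M t
      _ ≤ deriv (plateau M) t / t ^ a + 2 * deriv Real.smoothTransition (M - t) / (M - 1) ^ a := by
          rw [add_div]; gcongr
      _ = _ := by ring
  · rw [deriv_plateau_eq_zero ht, abs_zero, zero_div, zero_add]
    positivity

lemma integral_abs_deriv_plateau_div_rpow_le {a M : ℝ} (ha : 0 ≤ a) (hM : 1 < M) :
    ∫ t, |deriv (plateau M) t| / t ^ a ≤
      a * (∫ t, plateau M t / t ^ (a + 1)) + 2 / (M - 1) ^ a := by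
  have hf := isTestFunction_plateau M
  have hintl : Integrable fun t ↦ deriv (plateau M) t / t ^ a :=
    (isTestFunction_deriv hf).integrable_div_rpow a
  have hintr := (integrable_deriv_smoothTransition.comp_sub_left M).const_mul (2 / (M - 1) ^ a)
  calc ∫ t, |deriv (plateau M) t| / t ^ a
      ≤ ∫ t, (deriv (plateau M) t / t ^ a +
          2 / (M - 1) ^ a * deriv Real.smoothTransition (M - t)) := by
        exact integral_mono (hf.integrable_abs_deriv_div_rpow a) (hintl.add hintr)
          (abs_deriv_plateau_div_rpow_le ha hM)
    _ = a * (∫ t, plateau M t / t ^ (a + 1)) + 2 / (M - 1) ^ a := by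
        rw [integral_add hintl hintr, integral_deriv_div_rpow hf, integral_const_mul,
          integral_sub_left_eq_self _ volume M, integral_deriv_smoothTransition, mul_one]

lemma exists_isTestFunction_integral_abs_deriv_div_rpow_lt {a ε : ℝ} (ha : 0 < a) (hε : 0 < ε) :
    ∃ f : ℝ → ℝ, IsTestFunction (Ioi 0) f ∧ (∀ t, 0 ≤ f t) ∧
      ∫ t, |deriv f t| / t ^ a < (a + ε) * ∫ t, f t / t ^ (a + 1) := by
  have hbase := mul_pos hε (integral_plateau_div_rpow_pos one_lt_two (a + 1))
  have hlim : Tendsto (fun M : ℝ ↦ 2 / (M - 1) ^ a) atTop (𝓝 0) :=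
    tendsto_const_nhds.div_atTop ((tendsto_rpow_atTop ha).comp
      (tendsto_atTop_add_const_right atTop (-1) tendsto_id))
  obtain ⟨M, hM, hM2⟩ := ((hlim.eventually_lt_const hbase).and (eventually_ge_atTop 2)).exists
  have hf := isTestFunction_plateau M
  refine ⟨plateau M, hf, plateau_nonneg M, ?_⟩
  have hmono : ∫ t, plateau 2 t / t ^ (a + 1) ≤ ∫ t, plateau M t / t ^ (a + 1) := by
    refine integral_mono ((isTestFunction_plateau 2).integrable_div_rpow _)
      (hf.integrable_div_rpow _) fun t ↦ ?_
    rcases le_or_gt t 0 with ht | ht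
    · have hout (N : ℝ) : t ∉ Icc 1 N := fun h ↦ by linarith [h.1]
      simp [plateau_eq_zero (hout _)]
    · have hle : plateau 2 t ≤ plateau M t := monotone_plateau t hM2
      simp only
      gcongr
  calc ∫ t, |deriv (plateau M) t| / t ^ a
      ≤ a * (∫ t, plateau M t / t ^ (a + 1)) + 2 / (M - 1) ^ a :=
        integral_abs_deriv_plateau_div_rpow_le ha.le (by linarith)
    _ < a * (∫ t, plateau M t / t ^ (a + 1)) + ε * ∫ t, plateau M t / t ^ (a + 1) := by
        linarith [mul_le_mul_of_nonneg_left hmono hε.le]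
    _ = (a + ε) * ∫ t, plateau M t / t ^ (a + 1) := by ring

end Profile

section HalfSpace

lemma exists_isTestFunction_integral_norm_fderiv_le {E : Type*} [NormedAddCommGroup E]
    [NormedSpace ℝ E] [HasContDiffBump E] [FiniteDimensional ℝ E] [MeasurableSpace E]
    [BorelSpace E] (μ : Measure E) [μ.IsAddHaarMeasure] {η : ℝ} (hη : 0 < η) :
    ∃ g : E → ℝ, IsTestFunction univ g ∧ (∀ x, 0 ≤ g x) ∧ 0 < ∫ x, g x ∂μ ∧
      ∫ x, ‖fderiv ℝ g x‖ ∂μ ≤ η * ∫ x, g x ∂μ := by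
  let ρ : ContDiffBump (0 : E) := ⟨1, 2, one_pos, one_lt_two⟩
  set B := ∫ x, ‖fderiv ℝ ρ x‖ ∂μ
  have : 0 ≤ B := integral_nonneg fun _ ↦ norm_nonneg _
  have hA : 0 < ∫ x, ρ x ∂μ := ρ.integral_pos
  obtain ⟨T, hT, hTB⟩ : ∃ T > 0, T * B ≤ η * ∫ x, ρ x ∂μ := by
    refine ⟨(η * ∫ x, ρ x ∂μ) / (B + 1), by positivity, ?_⟩
    rw [div_mul_eq_mul_div]
    exact div_le_of_le_mul₀ (by positivity) (by positivity) (by gcongr; linarith)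
  set c := (T ^ Module.finrank ℝ E)⁻¹
  have hint : ∫ x, ρ (T • x) ∂μ = c * ∫ x, ρ x ∂μ := by
    simpa only [zero_add, smul_eq_mul] using integral_comp_add_smul (μ := μ) ρ 0 hT
  have hintD : ∫ x, ‖fderiv ℝ (fun x ↦ ρ (T • x)) x‖ ∂μ = T * (c * B) := by
    simp only [fderiv_comp_smul, norm_smul, Real.norm_of_nonneg hT.le]
    rw [integral_const_mul]
    simpa only [zero_add, smul_eq_mul] using
      congrArg (T * ·) (integral_comp_add_smul (μ := μ) (fun x ↦ ‖fderiv ℝ ρ x‖) 0 hT)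
  refine ⟨fun x ↦ ρ (T • x), ⟨ρ.contDiff.comp (contDiff_const_smul T),
    ρ.hasCompactSupport.comp_smul hT.ne', subset_univ _⟩, fun _ ↦ ρ.nonneg, ?_, ?_⟩
  · rw [hint]
    positivity
  · rw [hint, hintD, mul_left_comm, mul_left_comm η]
    gcongr

variable {E : Type*} [NormedAddCommGroup E] [InnerProductSpace ℝ E] {e : E}
  {f : ℝ → ℝ} {g : (ℝ ∙ e)ᗮ → ℝ}

lemma IsTestFunction.inner_mul_orthogonalProjection {I : Set ℝ}
    (he : ‖e‖ = 1) (hf : IsTestFunction I f) (hg : IsTestFunction univ g) :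
    IsTestFunction {x | inner ℝ e x ∈ I}
      fun x ↦ f (inner ℝ e x) * g ((ℝ ∙ e)ᗮ.orthogonalProjectionOnto x) := by
  let K : Set E := (fun p : ℝ × (ℝ ∙ e)ᗮ ↦ p.1 • e + p.2) '' (tsupport f ×ˢ tsupport g)
  refine isTestFunction_of_isCompact (K := K) ?_ ?_ ?_ fun x hx ↦ ?_
  · exact (hf.contDiff.comp (innerSL ℝ e).contDiff).mul
      (hg.contDiff.comp (ContinuousLinearMap.contDiff _))
  · exact (hf.hasCompactSupport.isCompact.prod hg.hasCompactSupport.isCompact).image (by fun_prop)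
  · rintro _ ⟨p, hp, rfl⟩
    have hp2 : inner ℝ e (p.2 : E) = 0 := Submodule.mem_orthogonal_singleton_iff_inner_right.1 p.2.2
    simpa [inner_add_right, inner_smul_right, he, hp2] using hf.tsupport_subset hp.1
  · contrapose! hx
    refine ⟨(inner ℝ e x, (ℝ ∙ e)ᗮ.orthogonalProjectionOnto x),
      ⟨subset_closure (left_ne_zero_of_mul hx), subset_closure (right_ne_zero_of_mul hx)⟩, ?_⟩
    have hdecomp := (ℝ ∙ e).starProjection_add_starProjection_orthogonal x
    rwa [Submodule.starProjection_unit_singleton ℝ he] at hdecomp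

lemma norm_fderiv_inner_mul_orthogonalProjection_le (he : ‖e‖ = 1) {x : E}
    (hf : DifferentiableAt ℝ f (inner ℝ e x))
    (hg : DifferentiableAt ℝ g ((ℝ ∙ e)ᗮ.orthogonalProjectionOnto x)) :
    ‖fderiv ℝ (fun x ↦ f (inner ℝ e x) * g ((ℝ ∙ e)ᗮ.orthogonalProjectionOnto x)) x‖ ≤
      |deriv f (inner ℝ e x)| * |g ((ℝ ∙ e)ᗮ.orthogonalProjectionOnto x)| +
        |f (inner ℝ e x)| * ‖fderiv ℝ g ((ℝ ∙ e)ᗮ.orthogonalProjectionOnto x)‖ := by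
  set P := (ℝ ∙ e)ᗮ.orthogonalProjectionOnto
  have hfe := hf.hasDerivAt.comp_hasFDerivAt x (innerSL ℝ e).hasFDerivAt
  have hgP := hg.hasFDerivAt.comp x P.hasFDerivAt
  have hderiv : fderiv ℝ (fun x ↦ f (inner ℝ e x) * g (P x)) x =
      f (inner ℝ e x) • (fderiv ℝ g (P x)).comp P +
        g (P x) • deriv f (inner ℝ e x) • innerSL ℝ e := (hfe.mul hgP).fderiv
  rw [hderiv, add_comm]
  refine (norm_add_le _ _).trans (add_le_add ?_ ?_)
  · rw [norm_smul, norm_smul, innerSL_apply_norm, he, mul_one, mul_comm, Real.norm_eq_abs,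
      Real.norm_eq_abs]
  · rw [norm_smul, Real.norm_eq_abs]
    gcongr
    exact (ContinuousLinearMap.opNorm_comp_le _ _).trans (mul_le_of_le_one_right (norm_nonneg _)
      (Submodule.orthogonalProjectionOnto_norm_le _))

variable [FiniteDimensional ℝ E] [MeasurableSpace E] [BorelSpace E]

lemma measurePreserving_inner_orthogonalProjectionOnto (he : ‖e‖ = 1) :
    MeasurePreserving fun x ↦ (inner ℝ e x, (ℝ ∙ e)ᗮ.orthogonalProjectionOnto x) := by
  convert! (((LinearIsometryEquiv.toSpanUnitSingleton e he).symm.measurePreserving).prod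
    (MeasurePreserving.id volume)).comp ((WithLp.volume_preserving_ofLp (ℝ ∙ e) (ℝ ∙ e)ᗮ).comp
      (ℝ ∙ e).orthogonalDecomposition.measurePreserving) using 1
  ext x : 1
  have hproj : (LinearIsometryEquiv.toSpanUnitSingleton (𝕜 := ℝ) e he).symm
      ((ℝ ∙ e).orthogonalProjectionOnto x) = inner ℝ e x := by
    rw [LinearIsometryEquiv.symm_apply_eq]
    exact Subtype.ext (Submodule.starProjection_unit_singleton ℝ he x)
  simp [hproj]

lemma integral_inner_mul_orthogonalProjection (he : ‖e‖ = 1) (hf : Integrable f)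
    (hg : Integrable g) :
    ∫ x : E, f (inner ℝ e x) * g ((ℝ ∙ e)ᗮ.orthogonalProjectionOnto x) =
      (∫ t, f t) * ∫ w, g w := by
  have hmp := measurePreserving_inner_orthogonalProjectionOnto he
  rw [← integral_prod_mul, ← Measure.volume_eq_prod, ← hmp.map_eq,
    integral_map hmp.aemeasurable (hmp.map_eq ▸ (hf.mul_prod hg).aestronglyMeasurable)]

lemma integrable_inner_mul_orthogonalProjection (he : ‖e‖ = 1) (hf : Integrable f)
    (hg : Integrable g) :
    Integrable fun x : E ↦ f (inner ℝ e x) * g ((ℝ ∙ e)ᗮ.orthogonalProjectionOnto x) :=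
  (measurePreserving_inner_orthogonalProjectionOnto he).integrable_comp_of_integrable
    (hf.mul_prod hg)

lemma integral_norm_fderiv_inner_mul_orthogonalProjection_div_rpow_le (he : ‖e‖ = 1)
    (hf : IsTestFunction (Ioi 0) f) (hf0 : ∀ t, 0 ≤ f t) (hg : IsTestFunction univ g)
    (hg0 : ∀ w, 0 ≤ g w) (a : ℝ) :
    ∫ x, ‖fderiv ℝ (fun x ↦ f (inner ℝ e x) * g ((ℝ ∙ e)ᗮ.orthogonalProjectionOnto x)) x‖ /
        inner ℝ e x ^ a ≤
      (∫ t, |deriv f t| / t ^ a) * (∫ w, g w) +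
        (∫ t, f t / t ^ a) * ∫ w, ‖fderiv ℝ g w‖ := by
  have hv := hf.inner_mul_orthogonalProjection he hg
  obtain ⟨C, hC⟩ := hv.contDiff.lipschitzWith_of_hasCompactSupport hv.hasCompactSupport (by simp)
  obtain ⟨B, hB⟩ := hg.contDiff.lipschitzWith_of_hasCompactSupport hg.hasCompactSupport (by simp)
  have hgi := hg.contDiff.continuous.integrable_of_hasCompactSupport (μ := volume)
    hg.hasCompactSupport
  have hgi' : Integrable fun w ↦ ‖fderiv ℝ g w‖ := integrable_norm_fderiv hB hg.hasCompactSupport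
  have hfi' := hf.integrable_abs_deriv_div_rpow a
  have hfi := hf.integrable_div_rpow a
  rw [← integral_inner_mul_orthogonalProjection he hfi' hgi,
    ← integral_inner_mul_orthogonalProjection he hfi hgi', ← integral_add
    (integrable_inner_mul_orthogonalProjection he hfi' hgi)
    (integrable_inner_mul_orthogonalProjection he hfi hgi')]
  refine integral_mono (integrable_norm_fderiv_div_rpow hC hv.hasCompactSupport (by fun_prop)
    hv.tsupport_subset a) ((integrable_inner_mul_orthogonalProjection he hfi' hgi).add
    (integrable_inner_mul_orthogonalProjection he hfi hgi')) fun x ↦ ?_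
  simp only
  rw [div_mul_eq_mul_div, div_mul_eq_mul_div, ← add_div]
  by_cases hx : 0 < inner ℝ e x
  · gcongr
    simpa only [abs_of_nonneg (hg0 _), abs_of_nonneg (hf0 _)] using
      norm_fderiv_inner_mul_orthogonalProjection_le he (hf.contDiff.differentiable (by simp) _)
        (hg.contDiff.differentiable (by simp) _)
  · rw [fderiv_of_notMem_tsupport ℝ fun h ↦ hx (hv.tsupport_subset h),
      image_eq_zero_of_notMem_tsupport fun h ↦ hx (hf.tsupport_subset h),
      image_eq_zero_of_notMem_tsupport fun h ↦ hx (hf.tsupport_subset (tsupport_deriv_subset h))]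
    simp

theorem exists_isTestFunction_halfSpace (he : ‖e‖ = 1) {a ε : ℝ} (ha : 0 < a) (hε : 0 < ε) :
    ∃ v : E → ℝ, IsTestFunction {z | 0 < inner ℝ e z} v ∧
      ∫ z, ‖fderiv ℝ v z‖ / inner ℝ e z ^ a <
        (a + ε) * ∫ z, |v z| / inner ℝ e z ^ (a + 1) := by
  obtain ⟨f, hf, hf0, hlt⟩ := exists_isTestFunction_integral_abs_deriv_div_rpow_lt ha hε
  set P := ∫ t, f t / t ^ a
  set F := ∫ t, f t / t ^ (a + 1)
  set A := ∫ t, |deriv f t| / t ^ a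
  obtain ⟨η, hη, hηP⟩ : ∃ η > 0, A + |P| * η < (a + ε) * F := by
    obtain ⟨η, hη, h⟩ := exists_pos_mul_lt (sub_pos.2 hlt) |P|
    exact ⟨η, hη, by linarith⟩
  obtain ⟨g, hg, hg0, hgpos, hgη⟩ := exists_isTestFunction_integral_norm_fderiv_le
    (volume : Measure (ℝ ∙ e)ᗮ) hη
  refine ⟨_, hf.inner_mul_orthogonalProjection he hg, ?_⟩
  calc _ ≤ A * (∫ w, g w) + P * ∫ w, ‖fderiv ℝ g w‖ :=
        integral_norm_fderiv_inner_mul_orthogonalProjection_div_rpow_le he hf hf0 hg hg0 a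
    _ ≤ A * (∫ w, g w) + |P| * (η * ∫ w, g w) := by
        gcongr
        exact le_abs_self P
    _ = (A + |P| * η) * ∫ w, g w := by ring
    _ < (a + ε) * F * ∫ w, g w := by gcongr
    _ = _ := by
        rw [mul_assoc, ← integral_inner_mul_orthogonalProjection he (hf.integrable_div_rpow _)
          (hg.contDiff.continuous.integrable_of_hasCompactSupport hg.hasCompactSupport)]
        simp only [abs_of_nonneg (mul_nonneg (hf0 _) (hg0 _)), div_mul_eq_mul_div]

end HalfSpace

section Transfer

variable {X : Type*} [TopologicalSpace X] [T2Space X] [MeasurableSpace X]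
  [OpensMeasurableSpace X] {μ : Measure X} {K : Set X} {g h ℓ : X → ℝ} {p q : ℝ}

lemma integral_div_rpow_le_of_le (hK : IsCompact K) (hg : Integrable g μ) (hg0 : ∀ x, 0 ≤ g x)
    (hgK : ∀ x ∉ K, g x = 0) (hℓ : ContinuousOn ℓ K) (hℓ0 : ∀ x ∈ K, 0 < ℓ x) (hp : 0 ≤ p)
    {D : X → ℝ} (hD : ContinuousOn D K) (hℓD : ∀ x ∈ K, ℓ x ≤ D x) :
    ∫ x, g x / D x ^ p ∂μ ≤ ∫ x, g x / ℓ x ^ p ∂μ := by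
  refine integral_mono
    (integrable_div_rpow_of_isCompact hK hg hgK hD (fun x hx ↦ (hℓ0 x hx).trans_le (hℓD x hx)) p)
    (integrable_div_rpow_of_isCompact hK hg hgK hℓ hℓ0 p) fun x ↦ ?_
  by_cases hx : x ∈ K
  · have hpos := hℓ0 x hx
    have hle := hℓD x hx
    have hgx := hg0 x
    simp only
    gcongr
  · simp only [hgK x hx, zero_div, le_refl]

variable [IsFiniteMeasureOnCompacts μ]

lemma exists_forall_integral_div_rpow_sub_le (hK : IsCompact K) (hh : Continuous h)
    (hhK : ∀ x ∉ K, h x = 0) (hℓ : ContinuousOn ℓ K) (hℓ0 : ∀ x ∈ K, 0 < ℓ x) (hq : 0 ≤ q) :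
    ∃ C, ∀ D : X → ℝ, ContinuousOn D K → (∀ x ∈ K, ℓ x ≤ D x) →
      ∫ x, h x / ℓ x ^ q ∂μ - ∫ x, h x / D x ^ q ∂μ ≤ C * ∫ x in K, (D x - ℓ x) ∂μ := by
  obtain ⟨c, hc, hcℓ⟩ := hK.exists_forall_le' hℓ hℓ0
  obtain ⟨M, hM⟩ := hK.exists_bound_of_continuousOn hh.continuousOn
  set L := (q * c ^ (-q - 1)).toNNReal
  have hhint : Integrable h μ :=
    hh.integrable_of_hasCompactSupport (.intro hK hhK)
  refine ⟨M * L, fun D hD hℓD ↦ ?_⟩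
  have hD0 x (hx : x ∈ K) : 0 < D x := (hℓ0 x hx).trans_le (hℓD x hx)
  have hintℓ := integrable_div_rpow_of_isCompact hK hhint hhK hℓ hℓ0 q
  have hintD := integrable_div_rpow_of_isCompact hK hhint hhK hD hD0 q
  rw [← integral_sub hintℓ hintD, ← integral_const_mul,
    ← setIntegral_eq_integral_of_forall_compl_eq_zero (s := K) fun x hx ↦ by
      rw [hhK x hx, zero_div, zero_div, sub_zero]]
  refine setIntegral_mono_on (hintℓ.sub hintD).integrableOn
    (((hD.sub hℓ).const_mul _).integrableOn_compact' hK hK.measurableSet) hK.measurableSet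
    fun x hx ↦ ?_
  have hlip := (lipschitzOnWith_rpow_neg hq hc).dist_le_mul _ (hcℓ x hx) _
    ((hcℓ x hx).trans (hℓD x hx))
  rw [dist_comm (ℓ x), Real.dist_eq, Real.dist_eq, abs_of_nonneg (sub_nonneg.2 (hℓD x hx))] at hlip
  calc h x / ℓ x ^ q - h x / D x ^ q = h x * (ℓ x ^ (-q) - D x ^ (-q)) := by
        rw [Real.rpow_neg (hℓ0 x hx).le, Real.rpow_neg (hD0 x hx).le]
        ring
    _ ≤ |h x| * |ℓ x ^ (-q) - D x ^ (-q)| := (le_abs_self _).trans_eq (abs_mul _ _)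
    _ ≤ M * (L * (D x - ℓ x)) := by
        have := (abs_nonneg _).trans (hM x hx)
        gcongr
        exact hM x hx
    _ = M * L * (D x - ℓ x) := (mul_assoc _ _ _).symm

lemma exists_pos_forall_integral_div_rpow_lt {κ : ℝ} (hK : IsCompact K) (hg : Integrable g μ)
    (hg0 : ∀ x, 0 ≤ g x) (hgK : ∀ x ∉ K, g x = 0) (hh : Continuous h) (hhK : ∀ x ∉ K, h x = 0)
    (hℓ : ContinuousOn ℓ K) (hℓ0 : ∀ x ∈ K, 0 < ℓ x) (hp : 0 ≤ p) (hq : 0 ≤ q) (hκ : 0 ≤ κ)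
    (hlt : ∫ x, g x / ℓ x ^ p ∂μ < κ * ∫ x, h x / ℓ x ^ q ∂μ) :
    ∃ δ > 0, ∀ D : X → ℝ, ContinuousOn D K → (∀ x ∈ K, ℓ x ≤ D x) →
      ∫ x in K, (D x - ℓ x) ∂μ ≤ δ →
        ∫ x, g x / D x ^ p ∂μ < κ * ∫ x, h x / D x ^ q ∂μ := by
  obtain ⟨C, hC⟩ := exists_forall_integral_div_rpow_sub_le (μ := μ) hK hh hhK hℓ hℓ0 hq
  obtain ⟨δ, hδ, hδlt⟩ := exists_pos_mul_lt (sub_pos.2 hlt) (κ * |C|)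
  refine ⟨δ, hδ, fun D hD hℓD hle ↦ ?_⟩
  have hint0 : 0 ≤ ∫ x in K, (D x - ℓ x) ∂μ :=
    setIntegral_nonneg hK.measurableSet fun x hx ↦ sub_nonneg.2 (hℓD x hx)
  have hloss : κ * (∫ x, h x / ℓ x ^ q ∂μ - ∫ x, h x / D x ^ q ∂μ) ≤ κ * |C| * δ :=
    calc _ ≤ κ * (C * ∫ x in K, (D x - ℓ x) ∂μ) := by gcongr; exact hC D hD hℓD
      _ ≤ κ * (|C| * δ) := by gcongr; exact le_abs_self C
      _ = κ * |C| * δ := (mul_assoc _ _ _).symm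
  linarith [integral_div_rpow_le_of_le hK hg hg0 hgK hℓ hℓ0 hp hD hℓD]

end Transfer

section Homothety

variable {E : Type*} [NormedAddCommGroup E] [NormedSpace ℝ E] {T : ℝ}

lemma isTestFunction_comp_homothety {Ω : Set E} {v : E → ℝ} (hv : IsTestFunction univ v)
    (hT : T ≠ 0) (y : E) (hΩ : ∀ z ∈ tsupport v, y + T • z ∈ Ω) :
    IsTestFunction Ω fun x ↦ v (T⁻¹ • (x - y)) := by
  refine isTestFunction_of_isCompact (K := (fun z ↦ y + T • z) '' tsupport v)
    (hv.contDiff.comp (by fun_prop)) (hv.hasCompactSupport.isCompact.image (by fun_prop))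
    (image_subset_iff.2 hΩ) fun x hx ↦ ?_
  refine image_eq_zero_of_notMem_tsupport fun h ↦ hx ⟨_, h, ?_⟩
  simp only [smul_inv_smul₀ hT, add_sub_cancel]

lemma norm_fderiv_comp_homothety (v : E → ℝ) (hT : 0 < T) (x y : E) :
    ‖fderiv ℝ (fun x ↦ v (T⁻¹ • (x - y))) x‖ = T⁻¹ * ‖fderiv ℝ v (T⁻¹ • (x - y))‖ := by
  rw [fderiv_comp_sub (f := fun x ↦ v (T⁻¹ • x)), fderiv_comp_smul, norm_smul,
    Real.norm_of_nonneg (inv_nonneg.2 hT.le)]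

lemma integral_comp_homothety_div_rpow [FiniteDimensional ℝ E] [MeasurableSpace E] [BorelSpace E]
    {μ : Measure E} [μ.IsAddHaarMeasure] (w : E → ℝ) {d : E → ℝ} (hd : ∀ x, 0 ≤ d x)
    (hT : 0 < T) (y : E) (p : ℝ) :
    ∫ x, w (T⁻¹ • (x - y)) / d x ^ p ∂μ =
      T ^ Module.finrank ℝ E / T ^ p * ∫ z, w z / (d (y + T • z) / T) ^ p ∂μ := by
  have hpow := (Real.rpow_pos_of_pos hT p).ne'
  have hpoint (z : E) : w (T⁻¹ • (y + T • z - y)) / d (y + T • z) ^ p =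
      (T ^ p)⁻¹ * (w z / (d (y + T • z) / T) ^ p) := by
    rw [add_sub_cancel_left, inv_smul_smul₀ hT.ne', Real.div_rpow (hd _) hT.le]
    field_simp
  have hscale := integral_comp_add_smul (μ := μ) (fun x ↦ w (T⁻¹ • (x - y)) / d x ^ p) y hT
  simp only [hpoint, smul_eq_mul] at hscale
  rw [integral_const_mul, inv_mul_eq_iff_eq_mul₀ hpow] at hscale
  rw [hscale]
  field_simp

end Homothety

section Sharpness

variable {E : Type*} [NormedAddCommGroup E] [InnerProductSpace ℝ E] [FiniteDimensional ℝ E]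
  [MeasurableSpace E] [BorelSpace E] {Ω : Set E} {s : ℝ}

theorem exists_isTestFunction_integral_norm_fderiv_div_rpow_lt (hΩ : IsOpen Ω)
    (hΩne : Ω.Nonempty) (hΩuniv : Ω ≠ univ)
    (hsuper : IsDistribSuperharmonicOn (infDist · Ωᶜ) Ω) (hs : 1 < s) {ε : ℝ} (hε : 0 < ε) :
    ∃ u : E → ℝ, IsTestFunction Ω u ∧
      ∫ x, ‖fderiv ℝ u x‖ / infDist x Ωᶜ ^ (s - 1) <
        (s - 1 + ε) * ∫ x, |u x| / infDist x Ωᶜ ^ s := by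
  obtain ⟨e, he, hblowUp⟩ := exists_blowUp hΩ hΩne hΩuniv hsuper
  have hs0 : 0 < s - 1 := sub_pos.2 hs
  obtain ⟨v, hv, hmodel⟩ := exists_isTestFunction_halfSpace he hs0 hε
  rw [sub_add_cancel] at hmodel
  obtain ⟨C, hC⟩ := hv.contDiff.lipschitzWith_of_hasCompactSupport hv.hasCompactSupport (by simp)
  obtain ⟨δ, hδ, hstable⟩ := exists_pos_forall_integral_div_rpow_lt hv.hasCompactSupport
    (integrable_norm_fderiv hC hv.hasCompactSupport) (fun _ ↦ norm_nonneg _)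
    (fun x hx ↦ by rw [fderiv_of_notMem_tsupport ℝ hx, norm_zero]) hv.contDiff.continuous.abs
    (fun x hx ↦ by rw [image_eq_zero_of_notMem_tsupport hx, abs_zero]) (by fun_prop)
    hv.tsupport_subset hs0.le (by linarith) (by linarith) hmodel
  obtain ⟨y, T, hT, hle, hint⟩ := hblowUp _ hv.hasCompactSupport hv.tsupport_subset δ hδ
  have hcont : Continuous fun z ↦ infDist (y + T • z) Ωᶜ / T :=
    ((continuous_infDist_pt _).comp (by fun_prop)).div_const T
  have hlt := hstable _ hcont.continuousOn hle hint
  have hmem z (hz : z ∈ tsupport v) : y + T • z ∈ Ω := by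
    by_contra hz'
    have hpos := (hv.tsupport_subset hz).trans_le (hle z hz)
    rw [infDist_zero_of_mem (mem_compl hz'), zero_div] at hpos
    exact hpos.false
  refine ⟨fun x ↦ v (T⁻¹ • (x - y)), isTestFunction_comp_homothety
    ⟨hv.contDiff, hv.hasCompactSupport, subset_univ _⟩ hT.ne' y hmem, ?_⟩
  simp only [norm_fderiv_comp_homothety v hT, mul_div_assoc]
  rw [integral_const_mul, integral_comp_homothety_div_rpow (fun z ↦ ‖fderiv ℝ v z‖)
      (fun _ ↦ infDist_nonneg) hT, integral_comp_homothety_div_rpow (fun z ↦ |v z|)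
      (fun _ ↦ infDist_nonneg) hT, Real.rpow_sub_one hT.ne', mul_left_comm (s - 1 + ε),
    ← mul_assoc, inv_mul_eq_div, div_div_eq_mul_div, div_right_comm, mul_div_cancel_right₀ _ hT.ne']
  exact mul_lt_mul_of_pos_left hlt (by positivity)

end Sharpness

section Euclidean

variable {E : Type*} [NormedAddCommGroup E] [InnerProductSpace ℝ E] [FiniteDimensional ℝ E]
  [MeasurableSpace E] [BorelSpace E] {Ω : Set E} {s : ℝ}

lemma setIntegral_abs_div_infDist_rpow {u : E → ℝ} (huΩ : tsupport u ⊆ Ω) (p : ℝ) :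
    ∫ x in Ω, |u x| / infDist x Ωᶜ ^ p = ∫ x, |u x| / infDist x Ωᶜ ^ p :=
  setIntegral_eq_integral_of_forall_compl_eq_zero fun x hx ↦ by
    rw [image_eq_zero_of_notMem_tsupport fun h ↦ hx (huΩ h), abs_zero, zero_div]

lemma setIntegral_norm_fderiv_div_infDist_rpow {u : E → ℝ} (huΩ : tsupport u ⊆ Ω) (p : ℝ) :
    ∫ x in Ω, ‖fderiv ℝ u x‖ / infDist x Ωᶜ ^ p = ∫ x, ‖fderiv ℝ u x‖ / infDist x Ωᶜ ^ p :=
  setIntegral_eq_integral_of_forall_compl_eq_zero fun x hx ↦ by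
    rw [fderiv_of_notMem_tsupport ℝ fun h ↦ hx (huΩ h), norm_zero, zero_div]

theorem mul_integral_abs_div_infDist_rpow_le (hΩ : IsOpen Ω) (hΩuniv : Ω ≠ univ)
    (hsuper : IsDistribSuperharmonicOn (infDist · Ωᶜ) Ω) (hs : 1 ≤ s) {u : E → ℝ} {C : ℝ≥0}
    (hu : LipschitzWith C u) (huc : HasCompactSupport u) (huΩ : tsupport u ⊆ Ω) :
    (s - 1) * ∫ x, |u x| / infDist x Ωᶜ ^ s ≤ ∫ x, ‖fderiv ℝ u x‖ / infDist x Ωᶜ ^ (s - 1) := by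
  have hne : Ωᶜ.Nonempty := nonempty_compl.2 hΩuniv
  have hlip : LipschitzWith 1 (infDist · Ωᶜ) := lipschitz_infDist_pt _
  refine mul_integral_abs_div_rpow_le hΩ hlip (fun x hx ↦ ?_) ?_ hsuper hs hu huc huΩ
  · exact (hΩ.isClosed_compl.notMem_iff_infDist_pos hne).1 (notMem_compl_iff.2 hx)
  · filter_upwards [hlip.ae_differentiableAt] with x hdiff hx
    exact norm_gradient_infDist hΩ.isClosed_compl hne (notMem_compl_iff.2 hx) hdiff

theorem l1_weighted_hardy_sharp_general (hΩ : IsOpen Ω) (hΩne : Ω.Nonempty) (hΩuniv : Ω ≠ univ)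
    (hsuper : IsDistribSuperharmonicOn (infDist · Ωᶜ) Ω) (hs : 1 < s) :
    (∀ (u : E → ℝ) (C : ℝ≥0), LipschitzWith C u → HasCompactSupport u → tsupport u ⊆ Ω →
      (s - 1) * ∫ x in Ω, |u x| / infDist x Ωᶜ ^ s ≤
        ∫ x in Ω, ‖fderiv ℝ u x‖ / infDist x Ωᶜ ^ (s - 1)) ∧
    ∀ ε > 0, ∃ u : E → ℝ, IsTestFunction Ω u ∧ u ≠ 0 ∧
      ∫ x in Ω, ‖fderiv ℝ u x‖ / infDist x Ωᶜ ^ (s - 1) <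
        (s - 1 + ε) * ∫ x in Ω, |u x| / infDist x Ωᶜ ^ s := by
  refine ⟨fun u C hu huc huΩ ↦ ?_, fun ε hε ↦ ?_⟩
  · rw [setIntegral_abs_div_infDist_rpow huΩ, setIntegral_norm_fderiv_div_infDist_rpow huΩ]
    exact mul_integral_abs_div_infDist_rpow_le hΩ hΩuniv hsuper hs.le hu huc huΩ
  · obtain ⟨u, hu, hlt⟩ :=
      exists_isTestFunction_integral_norm_fderiv_div_rpow_lt hΩ hΩne hΩuniv hsuper hs hε
    refine ⟨u, hu, fun h0 ↦ by simp [h0] at hlt, ?_⟩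
    rwa [setIntegral_abs_div_infDist_rpow hu.tsupport_subset,
      setIntegral_norm_fderiv_div_infDist_rpow hu.tsupport_subset]

end Euclidean

lemma lapl_eq_laplacian {n : ℕ} {φ : EuclideanSpace ℝ (Fin n) → ℝ} (hφ : ContDiff ℝ 2 φ)
    (x : EuclideanSpace ℝ (Fin n)) : lapl φ x = Δ φ x := by
  simp only [laplacian_eq_sum_fderiv_fderiv (EuclideanSpace.basisFun (Fin n) ℝ) hφ, lapl,
    EuclideanSpace.basisFun_apply]

lemma isDistribSuperharmonicOn_infDist_of_lapl {n : ℕ} {Ω : Set (EuclideanSpace ℝ (Fin n))}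
    (h : ∀ φ, IsTestFunction Ω φ → (∀ x, 0 ≤ φ x) → ∫ x in Ω, infDist x Ωᶜ * lapl φ x ≤ 0) :
    IsDistribSuperharmonicOn (infDist · Ωᶜ) Ω := by
  intro φ hφ hφ0
  rw [← setIntegral_eq_integral_of_forall_compl_eq_zero (s := Ω) fun x hx ↦ by
    simp only [infDist_zero_of_mem (mem_compl hx), zero_mul]]
  simpa only [lapl_eq_laplacian (contDiff_infty.1 hφ.contDiff 2)] using h φ hφ hφ0

end

/-- `L^1` weighted Hardy inequality with sharp constant on sets with
`−Δd ≥ 0` in the sense of distributions. -/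
theorem l1_weighted_hardy_sharp (n : ℕ) (hn : 1 ≤ n)
    (Ω : Set (EuclideanSpace ℝ (Fin n))) (hΩo : IsOpen Ω) (hΩne : Ω.Nonempty)
    (hΩuniv : Ω ≠ Set.univ)
    (hsub : ∀ φ : EuclideanSpace ℝ (Fin n) → ℝ, ContDiff ℝ (⊤ : ℕ∞) φ →
      HasCompactSupport φ → tsupport φ ⊆ Ω → (∀ z, 0 ≤ φ z) →
      (∫ x in Ω, Metric.infDist x Ωᶜ * lapl φ x) ≤ 0)
    (s : ℝ) (hs : 1 < s) :
    (∀ u : EuclideanSpace ℝ (Fin n) → ℝ, ContDiff ℝ (⊤ : ℕ∞) u →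
      HasCompactSupport u → tsupport u ⊆ Ω →
      (∫ x in Ω, ‖fderiv ℝ u x‖ / (Metric.infDist x Ωᶜ) ^ (s - 1)) ≥
        (s - 1) * ∫ x in Ω, |u x| / (Metric.infDist x Ωᶜ) ^ s) ∧
    (∀ ε : ℝ, 0 < ε →
      ∃ u : EuclideanSpace ℝ (Fin n) → ℝ, ContDiff ℝ (⊤ : ℕ∞) u ∧
        HasCompactSupport u ∧ tsupport u ⊆ Ω ∧ u ≠ 0 ∧
        (∫ x in Ω, ‖fderiv ℝ u x‖ / (Metric.infDist x Ωᶜ) ^ (s - 1)) <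
          (s - 1 + ε) * ∫ x in Ω, |u x| / (Metric.infDist x Ωᶜ) ^ s) := by
  have hsuper := isDistribSuperharmonicOn_infDist_of_lapl fun φ hφ ↦
    hsub φ hφ.contDiff hφ.hasCompactSupport hφ.tsupport_subset
  obtain ⟨hardy, sharp⟩ := l1_weighted_hardy_sharp_general hΩo hΩne hΩuniv hsuper hs
  refine ⟨fun u hu huc huΩ ↦ ?_, fun ε hε ↦ ?_⟩
  · obtain ⟨C, hC⟩ := hu.lipschitzWith_of_hasCompactSupport huc (by simp)
    exact hardy u C hC huc huΩ
  · obtain ⟨u, hu, hu0, hlt⟩ := sharp ε hε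
    exact ⟨u, hu.contDiff, hu.hasCompactSupport, hu.tsupport_subset, hu0, hlt⟩
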